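/- Let m, d ∈ ℕ with d ≥ m, and let X = (X₁,…,Xₙ) be a standard Gaussian random vector in ℝⁿ (i.i.d. N(0,1) coordinates). Then there exists a constant C(m,d) > 0, depending only on m and d, such that for every non-constant polynomial f(x) = Σ_{j₁=0}^{m} … Σ_{jₙ=0}^{m} a_{j₁,…,jₙ} x₁^{j₁}⋯xₙ^{jₙ} in which every variable appears to a power at most m and whose total degree d[f] := max{j₁+…+jₙ : a_{j₁,…,jₙ} ≠ 0} satisfies d[f] ≤ d, the distribution of f(X) has a density ϱ_f and ω(ϱ_f, ε) ≤ C(m,d) (ε/a[f])^{1/m} [ |ln(ε/a[f])|^{d−m} + 1 ] for every ε > 0, where a[f] := max_{j₁+…+jₙ = d[f]} |a_{j₁,…,jₙ}|. -/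

import Mathlib

/-!
The proof bounds `|E φ'(f(X))|` for test functions with `|φ| ≤ ε` and `|φ'| ≤ 1`, uniformly in the
dimension, by `K (ε/a)^{1/m} (|log (ε/a)|^{d-m} + 1)` (`main_estimate`). Taking for `φ` the moving
primitive `∫_s^{s+h} ψ` with `0 ≤ ψ ≤ 1` and `|h| ≤ ε`, this says that the law of `f(X)` and its
shift by `h` are close in total variation. Hence the law is absolutely continuous, and twice the
total variation bound is the claimed bound on the `L¹` modulus of the density. For `ε > a[f]` the
trivial bound `2` suffices.

In one dimension (`univariate_bound`), for a polynomial `p` of degree at most `m` with derivative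
`q`, integrate by parts against the Gaussian density after inserting the factor `q²/(q² + δ²)`.
The error terms are controlled by the total variation of `arctan (q/δ)`, at most `π` times
the number of monotonicity intervals of `q`, and by the small ball estimate for `q`, which follows
by factoring over `ℂ` and comparing the coefficients with the Mahler measure (`small_ball`).
Choosing `δ` optimally gives `|E φ'(p)| ≲ min (1, ε/‖q‖)^{1/m}`, where `‖·‖` is the sum of the
absolute values of the coefficients.

In several dimensions, the standard Gaussian law is invariant under resampling its component along
a unit vector (`map_resample`), so one-dimensional estimates can be applied on lines and averaged.
If the degree `D` of `f` is at most `m`, some unit direction `v` makes the top homogeneous part at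
least a constant times `a[f]` (`exists_direction`), and one application on the lines parallel to
`v` suffices. If `D > m`, applying the one-dimensional estimate in a coordinate direction bounds
`|E φ'(f)|` by the average of the weight `min (1, ε/|g|)^{1/m}` with `g` a partial derivative of
`f`. Passing from `g` to a further partial derivative costs one logarithm (`weight_peel`); after
`D - m - 1` such steps the degree is `m`, and a good direction ends the chain with one more
logarithm (`weight_chain`). Differentiating in variables that occur in the maximal monomial keeps
the top coefficient at least `a[f]`.
-/

open MeasureTheory ProbabilityTheory

/-- The `L¹` modulus of continuity `ω(ϱ, ε) = sup_{|h| ≤ ε} ∫ |ϱ(s+h) − ϱ(s)| ds`. -/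
noncomputable def omegaMod (ρ : ℝ → ℝ) (ε : ℝ) : ℝ :=
  sSup {r : ℝ | ∃ h : ℝ, |h| ≤ ε ∧ r = ∫ s : ℝ, |ρ (s + h) - ρ s|}

/-- The standard Gaussian measure on `ℝⁿ` (i.i.d. `N(0,1)` coordinates). -/
noncomputable def stdGaussian (n : ℕ) : Measure (Fin n → ℝ) :=
  Measure.pi fun _ => gaussianReal 0 1

/-- `a[f]`: the maximum of the absolute values of the coefficients of the monomials of
top total degree of `f`. -/
noncomputable def topCoeff {n : ℕ} (f : MvPolynomial (Fin n) ℝ) : ℝ :=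
  sSup {c : ℝ | ∃ j : Fin n →₀ ℕ, (j.sum fun _ e => e) = f.totalDegree ∧
    c = |MvPolynomial.coeff j f|}

/-! ### Small ball estimate in one Gaussian variable -/

/-- The sum of the absolute values of the coefficients of a real polynomial. -/
noncomputable def coeffNorm (p : Polynomial ℝ) : ℝ :=
  ∑ i ∈ Finset.range (p.natDegree + 1), |p.coeff i|

lemma coeffNorm_nonneg (p : Polynomial ℝ) : 0 ≤ coeffNorm p :=
  Finset.sum_nonneg fun _ _ => abs_nonneg _

lemma abs_coeff_le_coeffNorm (p : Polynomial ℝ) (i : ℕ) : |p.coeff i| ≤ coeffNorm p := by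
  by_cases h : i ∈ Finset.range (p.natDegree + 1)
  · exact Finset.single_le_sum (f := fun i => |p.coeff i|) (fun _ _ => abs_nonneg _) h
  · rw [Polynomial.coeff_eq_zero_of_natDegree_lt (by simpa [Nat.lt_succ_iff] using h)]
    simpa using coeffNorm_nonneg p

lemma coeffNorm_pos {p : Polynomial ℝ} (hp : p ≠ 0) : 0 < coeffNorm p :=
  lt_of_lt_of_le (abs_pos.mpr (Polynomial.leadingCoeff_ne_zero.mpr hp))
    (abs_coeff_le_coeffNorm p p.natDegree)

lemma abs_eval_le_coeffNorm (p : Polynomial ℝ) {x : ℝ} (hx : |x| ≤ 1) :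
    |p.eval x| ≤ coeffNorm p := by
  rw [Polynomial.eval_eq_sum_range, coeffNorm]
  refine (Finset.abs_sum_le_sum_abs _ _).trans (Finset.sum_le_sum fun i _ => ?_)
  rw [abs_mul, abs_pow]
  exact mul_le_of_le_one_right (abs_nonneg _) (pow_le_one₀ (abs_nonneg _) hx)

lemma coeffNorm_derivative_le (p : Polynomial ℝ) {m : ℕ} (hp : p.natDegree ≤ m) :
    coeffNorm (Polynomial.derivative p) ≤ m * ((m + 1) * coeffNorm p) := by
  have h1 : ∀ i ∈ Finset.range ((Polynomial.derivative p).natDegree + 1),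
      |(Polynomial.derivative p).coeff i| ≤ m * coeffNorm p := by
    intro i _
    rw [Polynomial.coeff_derivative, abs_mul, mul_comm]
    by_cases h : i + 1 ≤ m
    · have h2 : |(i : ℝ) + 1| ≤ m := by
        rw [abs_of_nonneg (by positivity)]; exact_mod_cast h
      gcongr
      exact abs_coeff_le_coeffNorm p _
    · rw [Polynomial.coeff_eq_zero_of_natDegree_lt (by omega)]
      have := coeffNorm_nonneg p
      simp; positivity
  refine (Finset.sum_le_sum h1).trans ?_
  rw [Finset.sum_const, Finset.card_range, nsmul_eq_mul]
  have h3 : (((Polynomial.derivative p).natDegree + 1 : ℕ) : ℝ) ≤ m + 1 := by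
    have := Polynomial.natDegree_derivative_le p
    exact_mod_cast (by omega : (Polynomial.derivative p).natDegree + 1 ≤ m + 1)
  have := coeffNorm_nonneg p
  calc _ ≤ ((m : ℝ) + 1) * (m * coeffNorm p) := by gcongr
    _ = _ := by ring

/-- Near a complex point `z`, the relative neighbourhood of size `t` has Gaussian measure `O(t)`. -/
lemma gaussian_near_root (z : ℂ) {t : ℝ} (ht : 0 ≤ t) :
    (gaussianReal 0 1).real {x : ℝ | ‖(x : ℂ) - z‖ ≤ t * max 1 ‖z‖} ≤ 16 * t := by
  by_cases ht2 : 1 / 2 ≤ t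
  · exact (measureReal_le_one).trans (by linarith)
  push Not at ht2
  set R := max 1 ‖z‖ with hR
  have hR1 : 1 ≤ R := le_max_left _ _
  have hsub : {x : ℝ | ‖(x : ℂ) - z‖ ≤ t * R} ⊆ Set.Icc (z.re - t * R) (z.re + t * R) := by
    intro x hx
    have h1 : |x - z.re| ≤ ‖(x : ℂ) - z‖ := by
      simpa using Complex.abs_re_le_norm ((x : ℂ) - z)
    have h2 := abs_le.mp (h1.trans hx)
    constructor <;> linarith [h2.1, h2.2]
  have hpdf : ∀ x ∈ {x : ℝ | ‖(x : ℂ) - z‖ ≤ t * R}, gaussianPDF 0 1 x ≤ ENNReal.ofReal (8 / R) := by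
    intro x hx
    rw [gaussianPDF]
    apply ENNReal.ofReal_le_ofReal
    rw [gaussianPDFReal]
    have hc : (√(2 * Real.pi * ((1 : NNReal) : ℝ)))⁻¹ ≤ 1 := by
      apply inv_le_one_of_one_le₀
      rw [Real.one_le_sqrt]
      have := Real.pi_gt_three
      simp; linarith
    have hc0 : 0 ≤ (√(2 * Real.pi * ((1 : NNReal) : ℝ)))⁻¹ := by positivity
    have hexp : Real.exp (-(x - 0) ^ 2 / (2 * ((1 : NNReal) : ℝ))) ≤ 8 / R := by
      by_cases hz : ‖z‖ ≤ 1
      · have : R = 1 := max_eq_left hz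
        rw [this]
        refine (Real.exp_le_one_iff.mpr ?_).trans (by norm_num)
        have := sq_nonneg x
        simp only [sub_zero, NNReal.coe_one, mul_one]
        linarith
      · have hRz : R = ‖z‖ := max_eq_right (by linarith)
        have hx2 : R / 2 ≤ |x| := by
          have h1 : ‖z‖ ≤ ‖(x : ℂ)‖ + ‖(x : ℂ) - z‖ := by
            have := norm_sub_le (x : ℂ) ((x : ℂ) - z)
            simpa using this
          have h2 : ‖(x : ℂ)‖ = |x| := by simp
          have h3 : ‖(x : ℂ) - z‖ ≤ t * R := hx
          nlinarith
        have hx3 : R ^ 2 / 4 ≤ x ^ 2 := by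
          rw [← sq_abs x]; nlinarith [abs_nonneg x]
        have h4 : Real.exp (-(x - 0) ^ 2 / (2 * ((1 : NNReal) : ℝ))) = (Real.exp (x ^ 2 / 2))⁻¹ := by
          rw [← Real.exp_neg]; congr 1; simp; ring
        rw [h4, inv_le_comm₀ (Real.exp_pos _) (by positivity), inv_div]
        have := Real.add_one_le_exp (x ^ 2 / 2)
        nlinarith
    calc _ ≤ 1 * (8 / R) := by gcongr
      _ = _ := one_mul _
  have hms : MeasurableSet {x : ℝ | ‖(x : ℂ) - z‖ ≤ t * R} := by
    apply measurableSet_le <;> fun_prop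
  have key : gaussianReal 0 1 {x : ℝ | ‖(x : ℂ) - z‖ ≤ t * R} ≤ ENNReal.ofReal (16 * t) := by
    rw [gaussianReal_apply 0 one_ne_zero]
    calc _ ≤ ∫⁻ x in {x : ℝ | ‖(x : ℂ) - z‖ ≤ t * R}, ENNReal.ofReal (8 / R) :=
          setLIntegral_mono' hms hpdf
      _ = ENNReal.ofReal (8 / R) * volume {x : ℝ | ‖(x : ℂ) - z‖ ≤ t * R} := by simp
      _ ≤ ENNReal.ofReal (8 / R) * volume (Set.Icc (z.re - t * R) (z.re + t * R)) := by gcongr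
      _ = ENNReal.ofReal (16 * t) := by
        rw [Real.volume_Icc, ← ENNReal.ofReal_mul (by positivity)]
        congr 1; field_simp; ring
  exact ENNReal.toReal_le_of_le_ofReal (by positivity) key

/-- Coefficients are controlled by the Mahler measure, written here as a product over roots. -/
lemma coeffNorm_le_prod_roots (p : Polynomial ℝ) {m : ℕ} (hp : p.natDegree ≤ m) :
    coeffNorm p ≤ 2 ^ m * (‖(p.map (algebraMap ℝ ℂ)).leadingCoeff‖ *
      ((p.map (algebraMap ℝ ℂ)).roots.map fun z => max 1 ‖z‖).prod) := by
  rw [← Polynomial.mahlerMeasure_eq_leadingCoeff_mul_prod_roots]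
  set P := p.map (algebraMap ℝ ℂ) with hP
  have hd : P.natDegree = p.natDegree := Polynomial.natDegree_map _
  have h1 : ∀ i ∈ Finset.range (p.natDegree + 1),
      |p.coeff i| ≤ p.natDegree.choose i * P.mahlerMeasure := by
    intro i _
    have := Polynomial.norm_coeff_le_choose_mul_mahlerMeasure i P
    rw [hd] at this
    simpa [hP] using this
  refine (Finset.sum_le_sum h1).trans ?_
  rw [← Finset.sum_mul]
  have h2 : (∑ i ∈ Finset.range (p.natDegree + 1), ((p.natDegree.choose i : ℕ) : ℝ))
      = 2 ^ p.natDegree := by exact_mod_cast Nat.sum_range_choose _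
  rw [h2]
  have := P.mahlerMeasure_nonneg
  gcongr
  norm_num

lemma multiset_prod_lt {s : Multiset ℂ} (hs : s ≠ 0) {f g : ℂ → ℝ} (hf : ∀ z ∈ s, 0 < f z)
    (h : ∀ z ∈ s, f z < g z) : (s.map f).prod < (s.map g).prod := by
  induction s using Multiset.induction_on with
  | empty => exact absurd rfl hs
  | cons a s ih =>
    have hf' : ∀ z ∈ s, 0 < f z := fun z hz => hf z (Multiset.mem_cons_of_mem hz)
    have h' : ∀ z ∈ s, f z < g z := fun z hz => h z (Multiset.mem_cons_of_mem hz)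
    have hle : (s.map f).prod ≤ (s.map g).prod := by
      by_cases hs0 : s = 0
      · simp [hs0]
      · exact (ih hs0 hf' h').le
    have hpos : 0 < (s.map f).prod := by
      apply Multiset.prod_pos
      intro b hb
      obtain ⟨z, hz, rfl⟩ := Multiset.mem_map.mp hb
      exact hf' z hz
    rw [Multiset.map_cons, Multiset.map_cons, Multiset.prod_cons, Multiset.prod_cons]
    have ha := Multiset.mem_cons_self a s
    exact mul_lt_mul (h a ha) hle hpos ((hf a ha).trans (h a ha)).le

/-- Small ball estimate for a polynomial of degree at most `m` of one Gaussian variable. -/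
lemma small_ball (m : ℕ) (hm : 1 ≤ m) (p : Polynomial ℝ) (hp : p.natDegree ≤ m) (hp0 : p ≠ 0)
    {s : ℝ} (hs : 0 < s) :
    (gaussianReal 0 1).real {x : ℝ | |p.eval x| ≤ s * coeffNorm p} ≤
      (16 * m * 2 ^ m) * s ^ ((1 : ℝ) / m) := by
  have hm' : (1 : ℝ) ≤ m := by exact_mod_cast hm
  have h2m : (1 : ℝ) ≤ 2 ^ m := one_le_pow₀ (by norm_num)
  by_cases hs1 : 1 ≤ s
  · refine measureReal_le_one.trans ?_
    have : 1 ≤ s ^ ((1 : ℝ) / m) := Real.one_le_rpow hs1 (by positivity)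
    nlinarith [mul_le_mul hm' h2m (by norm_num) (by positivity)]
  push Not at hs1
  have hN := coeffNorm_pos hp0
  set P := p.map (algebraMap ℝ ℂ) with hP
  have hP0 : P ≠ 0 := by
    rw [hP, Polynomial.map_ne_zero_iff (algebraMap ℝ ℂ).injective]; exact hp0
  have hspl := IsAlgClosed.splits P
  have hcard : P.roots.card = p.natDegree := by
    rw [← hspl.natDegree_eq_card_roots, hP, Polynomial.natDegree_map]
  have hlc : 0 < ‖P.leadingCoeff‖ := norm_pos_iff.mpr (Polynomial.leadingCoeff_ne_zero.mpr hP0)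
  have heval : ∀ x : ℝ, |p.eval x| = ‖P.leadingCoeff‖ *
      (P.roots.map fun z => ‖(x : ℂ) - z‖).prod := by
    intro x
    have h1 : ‖P.eval (x : ℂ)‖ = |p.eval x| := by
      have := Polynomial.eval_map_algebraMap p (B := ℂ) (x : ℂ)
      rw [hP, this]
      have h2 : Polynomial.aeval (x : ℂ) p = ((p.eval x : ℝ) : ℂ) := by
        exact Polynomial.aeval_algebraMap_apply_eq_algebraMap_eval (A := ℂ) x p
      rw [h2]; simp
    rw [← h1, hspl.eval_eq_prod_roots, norm_mul]
    congr 1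
    have h3 := Multiset.prod_hom (P.roots.map fun z => (x : ℂ) - z) (normHom : ℂ →*₀ ℝ)
    rw [Multiset.map_map] at h3
    exact h3.symm
  set t : ℝ := 2 ^ m * s ^ ((1 : ℝ) / m) with ht
  have ht0 : 0 < t := by positivity
  have htm : 1 ≤ p.natDegree → 2 ^ m * s ≤ t ^ p.natDegree := by
    intro h1
    have e1 : s ≤ (s ^ ((1 : ℝ) / m)) ^ p.natDegree := by
      rw [← Real.rpow_natCast, ← Real.rpow_mul hs.le]
      nth_rw 1 [← Real.rpow_one s]
      apply Real.rpow_le_rpow_of_exponent_ge hs hs1.le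
      rw [one_div, inv_mul_le_iff₀ (by positivity), mul_one]
      exact_mod_cast hp
    rw [ht, mul_pow]
    gcongr
    exact le_self_pow₀ h2m (by omega)
  have hsub : {x : ℝ | |p.eval x| ≤ s * coeffNorm p} ⊆
      ⋃ z ∈ P.roots.toFinset, {x : ℝ | ‖(x : ℂ) - z‖ ≤ t * max 1 ‖z‖} := by
    intro x hx
    by_contra hcon
    simp only [Set.mem_iUnion, Set.mem_ofPred_eq, not_exists, not_le, Multiset.mem_toFinset,
      exists_prop, not_and] at hcon hx
    have hle : |p.eval x| ≤ s * (2 ^ m * (‖P.leadingCoeff‖ *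
        (P.roots.map fun z => max 1 ‖z‖).prod)) :=
      hx.trans (mul_le_mul_of_nonneg_left (coeffNorm_le_prod_roots p hp) hs.le)
    by_cases hd : p.natDegree = 0
    · -- a constant polynomial satisfies `|p| = coeffNorm p`
      have hc : |p.eval x| = coeffNorm p := by
        rw [Polynomial.eval_eq_sum_range, coeffNorm, hd]; simp
      rw [hc] at hx
      nlinarith
    · have hne : P.roots ≠ 0 := by
        intro h; rw [h] at hcard; simp at hcard; omega
      have hlt := multiset_prod_lt hne (f := fun z => t * max 1 ‖z‖)
        (g := fun z => ‖(x : ℂ) - z‖) (fun z _ => by positivity) hcon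
      rw [Multiset.prod_map_mul, Multiset.map_const', Multiset.prod_replicate, hcard] at hlt
      rw [heval x] at hle
      set Q := (P.roots.map fun z => max 1 ‖z‖).prod with hQ
      have hQ0 : 0 ≤ Q := le_trans zero_le_one (Polynomial.one_le_prod_max_one_norm_roots P)
      have h3 : 2 ^ m * s * Q ≤ t ^ p.natDegree * Q :=
        mul_le_mul_of_nonneg_right (htm (by omega)) hQ0
      have h4 := mul_lt_mul_of_pos_left hlt hlc
      nlinarith
  calc _ ≤ (gaussianReal 0 1).real
        (⋃ z ∈ P.roots.toFinset, {x : ℝ | ‖(x : ℂ) - z‖ ≤ t * max 1 ‖z‖}) :=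
        measureReal_mono hsub (measure_ne_top _ _)
    _ ≤ ∑ z ∈ P.roots.toFinset,
        (gaussianReal 0 1).real {x : ℝ | ‖(x : ℂ) - z‖ ≤ t * max 1 ‖z‖} :=
        measureReal_biUnion_finset_le _ _
    _ ≤ ∑ z ∈ P.roots.toFinset, 16 * t := Finset.sum_le_sum fun z _ => gaussian_near_root z ht0.le
    _ = P.roots.toFinset.card * (16 * t) := by rw [Finset.sum_const, nsmul_eq_mul]
    _ ≤ m * (16 * t) := by
      gcongr
      exact (Multiset.toFinset_card_le _).trans (hcard.trans_le hp)
    _ = _ := by rw [ht]; ring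

/-! ### Truncated weights and their averages -/

/-- The weight `min (1, (ε / y) ^ (1 / m))`, cut off from below at its value for
`y = a`; the form of the
denominator avoids dividing by zero at `y = 0`. -/
noncomputable def weight (m : ℕ) (ε a y : ℝ) : ℝ :=
  (ε / max ε (min y a)) ^ ((1 : ℝ) / m)

section Weight

variable {m : ℕ} {ε a : ℝ}

lemma weight_nonneg (hε : 0 < ε) (y : ℝ) : 0 ≤ weight m ε a y := by
  unfold weight; positivity

lemma weight_le_one (hε : 0 < ε) (y : ℝ) : weight m ε a y ≤ 1 := by
  unfold weight
  apply Real.rpow_le_one (by positivity) _ (by positivity)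
  exact div_le_one_of_le₀ (le_max_left _ _) (by positivity)

lemma weight_anti (hε : 0 < ε) : Antitone (weight m ε a) := by
  intro x y hxy
  unfold weight
  gcongr

lemma le_weight (hε : 0 < ε) (hεa : ε ≤ a) (y : ℝ) : (ε / a) ^ ((1 : ℝ) / m) ≤ weight m ε a y := by
  unfold weight
  have : max ε (min y a) ≤ a := max_le hεa (min_le_right _ _)
  have : 0 < max ε (min y a) := by positivity
  have : 0 ≤ ε / a := div_nonneg hε.le (hε.le.trans hεa)
  gcongr

lemma weight_of_le (hεa : ε ≤ a) {y : ℝ} (hy : a ≤ y) :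
    weight m ε a y = (ε / a) ^ ((1 : ℝ) / m) := by
  unfold weight
  rw [min_eq_right hy, max_eq_right hεa]

lemma weight_eq_one (hε : 0 < ε) {y : ℝ} (hy : y ≤ ε) : weight m ε a y = 1 := by
  unfold weight
  rw [max_eq_left ((min_le_left _ _).trans hy), div_self hε.ne', Real.one_rpow]

lemma rpow_le_weight (hε : 0 < ε) {y : ℝ} (hy : ε ≤ y) :
    (ε / y) ^ ((1 : ℝ) / m) ≤ weight m ε a y := by
  unfold weight
  have : max ε (min y a) ≤ y := max_le hy (min_le_left _ _)
  have : 0 < max ε (min y a) := by positivity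
  have : 0 ≤ ε / y := div_nonneg hε.le (hε.le.trans hy)
  gcongr

lemma weight_measurable : Measurable (weight m ε a) := by
  unfold weight
  fun_prop

/-- Scaling the argument by `c ≥ 1` costs a factor of at most `c`. -/
lemma weight_le_mul (hm : 1 ≤ m) (hε : 0 < ε) (ha : 0 < a) {c y : ℝ} (hc : 1 ≤ c) :
    weight m ε a y ≤ c * weight m ε a (c * y) := by
  have hc0 : 0 < c := by linarith
  have h1 : max ε (min (c * y) a) ≤ c * max ε (min y a) := by
    rw [mul_max_of_nonneg _ _ hc0.le, mul_min_of_nonneg _ _ hc0.le]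
    apply max_le_max (by nlinarith)
    apply min_le_min le_rfl (by nlinarith)
  have h2 : 0 < max ε (min (c * y) a) := by positivity
  have h3 : ε / max ε (min y a) ≤ c * (ε / max ε (min (c * y) a)) := by
    rw [mul_div_assoc', div_le_div_iff₀ (by positivity) h2]
    nlinarith
  unfold weight
  calc _ ≤ (c * (ε / max ε (min (c * y) a))) ^ ((1 : ℝ) / m) := by gcongr
    _ = c ^ ((1 : ℝ) / m) * (ε / max ε (min (c * y) a)) ^ ((1 : ℝ) / m) :=
      Real.mul_rpow hc0.le (by positivity)
    _ ≤ _ := by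
      gcongr
      nth_rw 2 [← Real.rpow_one c]
      apply Real.rpow_le_rpow_of_exponent_le hc
      have : (1 : ℝ) ≤ m := by exact_mod_cast hm
      rw [one_div]; exact inv_le_one_of_one_le₀ this

lemma weight_integrable {α : Type*} [MeasurableSpace α] {μ : Measure α} [IsFiniteMeasure μ]
    (hε : 0 < ε) {g : α → ℝ} (hg : Measurable g) :
    Integrable (fun x => weight m ε a (g x)) μ := by
  refine Integrable.of_bound (weight_measurable.comp hg).aestronglyMeasurable 1
    (Filter.Eventually.of_forall fun x => ?_)
  rw [Real.norm_of_nonneg (weight_nonneg hε _)]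
  exact weight_le_one hε _

end Weight

/-- A variable with values in `[0, 1]` in weak `L¹` with constant `B` has expectation at most
`b + B log (1 / b)`. -/
lemma integral_le_of_weak {μ : Measure ℝ} [IsProbabilityMeasure μ] {W : ℝ → ℝ} (hW : Measurable W)
    (h0 : ∀ x, 0 ≤ W x) (h1 : ∀ x, W x ≤ 1) {b B : ℝ} (hb : 0 < b) (hb1 : b ≤ 1)
    (hweak : ∀ u, b < u → u ≤ 1 → μ.real {x | u ≤ W x} ≤ B / u) :
    ∫ x, W x ∂μ ≤ b + B * Real.log (1 / b) := by
  have hInt : Integrable W μ := Integrable.of_bound hW.aestronglyMeasurable 1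
    (Filter.Eventually.of_forall fun x => by rw [Real.norm_of_nonneg (h0 x)]; exact h1 x)
  rw [hInt.integral_eq_integral_Ioc_meas_le (M := 1) (Filter.Eventually.of_forall h0)
    (Filter.Eventually.of_forall h1)]
  have hanti : Antitone fun u => μ.real {x | u ≤ W x} := by
    intro u v huv
    exact measureReal_mono (fun x hx => huv.trans hx) (measure_ne_top _ _)
  have hii : ∀ c d : ℝ, IntervalIntegrable (fun u => μ.real {x | u ≤ W x}) volume c d :=
    fun c d => hanti.intervalIntegrable
  rw [← intervalIntegral.integral_of_le zero_le_one,
    ← intervalIntegral.integral_add_adjacent_intervals (hii 0 b) (hii b 1)]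
  apply add_le_add
  · calc _ ≤ ∫ _ in (0 : ℝ)..b, (1 : ℝ) :=
        intervalIntegral.integral_mono_on hb.le (hii 0 b) (by simp) fun _ _ => measureReal_le_one
      _ = b := by simp
  · have hinv : ∫ u in b..1, B * u⁻¹ = B * Real.log (1 / b) := by
      rw [intervalIntegral.integral_const_mul, integral_inv_of_pos hb one_pos]
    rw [← hinv]
    apply intervalIntegral.integral_mono_on_of_le_Ioo hb1 (hii b 1)
    · apply ContinuousOn.intervalIntegrable
      apply ContinuousOn.mul continuousOn_const
      apply ContinuousOn.inv₀ continuousOn_id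
      intro x hx
      rw [Set.uIcc_of_le hb1] at hx
      exact (hb.trans_le hx.1).ne'
    · intro u hu
      rw [← div_eq_mul_inv]
      exact hweak u hu.1 hu.2.le

/-- Averaging the weight along one Gaussian variable costs at most one logarithm. -/
lemma integral_weight_le (m : ℕ) (hm : 1 ≤ m) (p : Polynomial ℝ) (hp : p.natDegree ≤ m)
    {ε a : ℝ} (hε : 0 < ε) (hεa : ε ≤ a) :
    ∫ x, weight m ε a |p.eval x| ∂(gaussianReal 0 1) ≤
      (16 * m * 2 ^ m) * (1 + Real.log (a / ε)) * weight m ε a (coeffNorm p) := by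
  have hm' : (1 : ℝ) ≤ m := by exact_mod_cast hm
  have h2m : (1 : ℝ) ≤ 2 ^ m := one_le_pow₀ (by norm_num)
  have ha : 0 < a := hε.trans_le hεa
  have hA : (1 : ℝ) ≤ 16 * m * 2 ^ m := by
    nlinarith [mul_le_mul hm' h2m (by norm_num) (by positivity)]
  have hL : 0 ≤ Real.log (a / ε) := Real.log_nonneg (by rwa [one_le_div hε])
  have hmeas : Measurable fun x => weight m ε a |p.eval x| :=
    weight_measurable.comp (by fun_prop)
  by_cases hN : coeffNorm p < ε
  · rw [weight_eq_one hε hN.le, mul_one]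
    calc _ ≤ ∫ _, (1 : ℝ) ∂(gaussianReal 0 1) :=
          integral_mono (weight_integrable hε (by fun_prop)) (by simp) fun x => weight_le_one hε _
      _ = 1 := by simp
      _ ≤ _ := by nlinarith
  push Not at hN
  have hNpos : 0 < coeffNorm p := hε.trans_le hN
  have hp0 : p ≠ 0 := by rintro rfl; simp [coeffNorm] at hNpos
  set b := (ε / a) ^ ((1 : ℝ) / m) with hb
  have hb0 : 0 < b := by positivity
  have hb1 : b ≤ 1 := Real.rpow_le_one (by positivity) (by rwa [div_le_one ha]) (by positivity)
  set A : ℝ := 16 * m * 2 ^ m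
  have key := integral_le_of_weak (μ := gaussianReal 0 1) hmeas (fun x => weight_nonneg hε _)
    (fun x => weight_le_one hε _) hb0 hb1 (B := A * (ε / coeffNorm p) ^ ((1 : ℝ) / m)) (by
      intro u hu hu1
      have hu0 : 0 < u := hb0.trans hu
      -- the level set `u ≤ weight` is a sublevel set of `|p|` at height `ε / u ^ m`
      have hsub : {x | u ≤ weight m ε a |p.eval x|} ⊆
          {x | |p.eval x| ≤ (ε / u ^ m / coeffNorm p) * coeffNorm p} := by
        intro x hx
        simp only [Set.mem_ofPred_eq] at hx ⊢
        rw [div_mul_cancel₀ _ hNpos.ne']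
        have hpow : ∀ y : ℝ, 0 ≤ y → (y ^ ((1 : ℝ) / m)) ^ m = y := by
          intro y hy
          rw [one_div, Real.rpow_inv_natCast_pow hy (by omega)]
        have h1 : u ^ m ≤ ε / max ε (min |p.eval x| a) := by
          rw [← hpow (ε / max ε (min |p.eval x| a)) (by positivity)]
          exact pow_le_pow_left₀ hu0.le hx m
        have h2 : ε / a < u ^ m := by
          rw [← hpow (ε / a) (by positivity)]
          exact pow_lt_pow_left₀ hu hb0.le (by omega)
        have h3 : max ε (min |p.eval x| a) ≤ ε / u ^ m := by
          rw [le_div_comm₀ (by positivity) (by positivity)]; exact h1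
        have h4 : ε / u ^ m < a := by
          rw [div_lt_comm₀ (by positivity) ha]; exact h2
        have h5 := (le_max_right _ _).trans h3
        rcases min_le_iff.mp h5 with h | h
        · exact h
        · linarith
      calc _ ≤ _ := measureReal_mono hsub (measure_ne_top _ _)
        _ ≤ A * (ε / u ^ m / coeffNorm p) ^ ((1 : ℝ) / m) :=
          small_ball m hm p hp hp0 (by positivity)
        _ = _ := by
          rw [div_right_comm, Real.div_rpow (by positivity) (by positivity), one_div,
            Real.pow_rpow_inv_natCast hu0.le (by omega), mul_div_assoc])
  have hlogb : Real.log (1 / b) ≤ Real.log (a / ε) := by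
    have : 1 / b = (a / ε) ^ ((1 : ℝ) / m) := by
      rw [hb, one_div, ← Real.inv_rpow (by positivity), inv_div]
    rw [this, Real.log_rpow (by positivity)]
    apply mul_le_of_le_one_left hL
    rw [one_div]; exact inv_le_one_of_one_le₀ hm'
  have h6 : (ε / coeffNorm p) ^ ((1 : ℝ) / m) ≤ weight m ε a (coeffNorm p) := rpow_le_weight hε hN
  have h7 : b ≤ weight m ε a (coeffNorm p) := le_weight hε hεa _
  have hw := weight_nonneg (m := m) (a := a) hε (coeffNorm p)
  have hlog0 : 0 ≤ Real.log (1 / b) := Real.log_nonneg (by rwa [one_le_div hb0])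
  calc _ ≤ _ := key
    _ ≤ weight m ε a (coeffNorm p) + A * weight m ε a (coeffNorm p) * Real.log (a / ε) := by
      gcongr
    _ ≤ _ := by nlinarith [mul_le_mul_of_nonneg_right hA hw]

/-- The Gaussian measure of `[-1, 1]`. -/
noncomputable def unitMass : ℝ := (gaussianReal 0 1).real (Set.Icc (-1) 1)

lemma unitMass_pos : 0 < unitMass := by
  rw [unitMass, measureReal_def, ENNReal.toReal_pos_iff]
  refine ⟨?_, measure_lt_top _ _⟩
  rw [pos_iff_ne_zero]
  intro h
  have := gaussianReal_absolutelyContinuous' 0 (one_ne_zero : (1 : NNReal) ≠ 0) h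
  simp at this
  norm_num at this

/-- On `[-1, 1]` the polynomial is bounded by its coefficient norm, and the weight is decreasing,
so the weight at the coefficient norm is at most an average over `[-1, 1]`. -/
lemma weight_coeffNorm_le (m : ℕ) (p : Polynomial ℝ) {ε a : ℝ} (hε : 0 < ε) :
    weight m ε a (coeffNorm p) ≤
      unitMass⁻¹ * ∫ x, weight m ε a |p.eval x| ∂(gaussianReal 0 1) := by
  rw [inv_mul_eq_div, le_div_iff₀ unitMass_pos]
  have hi : Integrable (fun x => weight m ε a |p.eval x|) (gaussianReal 0 1) :=
    weight_integrable hε (by fun_prop)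
  calc _ = ∫ _ in Set.Icc (-1 : ℝ) 1, weight m ε a (coeffNorm p) ∂(gaussianReal 0 1) := by
        rw [setIntegral_const, smul_eq_mul, mul_comm]; rfl
    _ ≤ ∫ x in Set.Icc (-1 : ℝ) 1, weight m ε a |p.eval x| ∂(gaussianReal 0 1) := by
        apply setIntegral_mono_on (by simp) hi.integrableOn measurableSet_Icc
        intro x hx
        exact weight_anti hε (abs_eval_le_coeffNorm p (abs_le.mpr hx))
    _ ≤ _ := setIntegral_le_integral hi (Filter.Eventually.of_forall fun x => weight_nonneg hε _)

/-- Passing from the coefficient norm of `p` to the pointwise size of `p'`. -/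
lemma weight_coeffNorm_le_derivative (m : ℕ) (hm : 1 ≤ m) (p : Polynomial ℝ) (hp : p.natDegree ≤ m)
    {ε a : ℝ} (hε : 0 < ε) (ha : 0 < a) :
    weight m ε a (coeffNorm p) ≤ (m * (m + 1)) * unitMass⁻¹ *
      ∫ x, weight m ε a |(Polynomial.derivative p).eval x| ∂(gaussianReal 0 1) := by
  have hm' : (1 : ℝ) ≤ m := by exact_mod_cast hm
  calc _ ≤ (m * (m + 1)) * weight m ε a ((m * (m + 1)) * coeffNorm p) :=
        weight_le_mul hm hε ha (by nlinarith)
    _ ≤ (m * (m + 1)) * weight m ε a (coeffNorm (Polynomial.derivative p)) := by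
        gcongr
        apply weight_anti hε
        rw [mul_assoc]
        exact coeffNorm_derivative_le p hp
    _ ≤ (m * (m + 1)) * (unitMass⁻¹ * _) := by
        gcongr
        exact weight_coeffNorm_le m _ hε
    _ = _ := by ring

/-! ### Variation of the arctangent and Gaussian integration by parts -/

/-- The total variation of `arctan (q / δ)` over an interval is at most `π` times the number of
monotonicity intervals of `q`. -/
lemma arctan_variation (q : Polynomial ℝ) {δ : ℝ} (hδ : 0 < δ) (k : ℕ) :
    ∀ (S : Finset ℝ), S.card ≤ k → ∀ a b : ℝ, a ≤ b →
      (∀ x ∈ Set.Ioo a b, (Polynomial.derivative q).eval x = 0 → x ∈ S) →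
      ∫ x in a..b, |(Polynomial.derivative q).eval x| * (δ / (q.eval x ^ 2 + δ ^ 2)) ≤
        Real.pi * (S.card + 1) := by
  set F : ℝ → ℝ := fun x => |(Polynomial.derivative q).eval x| * (δ / (q.eval x ^ 2 + δ ^ 2))
    with hF
  have hden : ∀ x, q.eval x ^ 2 + δ ^ 2 ≠ 0 := fun x => by positivity
  have hFc : Continuous F := by
    apply Continuous.mul (by fun_prop)
    exact Continuous.div (by fun_prop) (by fun_prop) hden
  have hii : ∀ c d : ℝ, IntervalIntegrable F volume c d := fun c d => hFc.intervalIntegrable c d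
  -- the case without critical points
  have base : ∀ a b : ℝ, a ≤ b →
      (∀ x ∈ Set.Ioo a b, (Polynomial.derivative q).eval x ≠ 0) →
      ∫ x in a..b, F x ≤ Real.pi := by
    intro a b hab hne
    have hd : ∀ x, HasDerivAt (fun x => Real.arctan (q.eval x / δ))
        ((Polynomial.derivative q).eval x * (δ / (q.eval x ^ 2 + δ ^ 2))) x := by
      intro x
      have h1 := ((q.hasDerivAt x).div_const δ).arctan
      convert h1 using 1
      field_simp
      ring
    have hcd : Continuous fun x => (Polynomial.derivative q).eval x *
        (δ / (q.eval x ^ 2 + δ ^ 2)) := by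
      apply Continuous.mul (by fun_prop)
      exact Continuous.div (by fun_prop) (by fun_prop) hden
    have hval : ∫ x in a..b, (Polynomial.derivative q).eval x * (δ / (q.eval x ^ 2 + δ ^ 2)) =
        Real.arctan (q.eval b / δ) - Real.arctan (q.eval a / δ) :=
      intervalIntegral.integral_eq_sub_of_hasDerivAt (fun x _ => hd x)
        (hcd.intervalIntegrable a b)
    have hb1 := Real.arctan_lt_pi_div_two (q.eval b / δ)
    have hb2 := Real.neg_pi_div_two_lt_arctan (q.eval b / δ)
    have ha1 := Real.arctan_lt_pi_div_two (q.eval a / δ)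
    have ha2 := Real.neg_pi_div_two_lt_arctan (q.eval a / δ)
    by_cases hpos : ∃ x ∈ Set.Ioo a b, 0 < (Polynomial.derivative q).eval x
    · obtain ⟨x, hx, hx0⟩ := hpos
      have hall : ∀ y ∈ Set.Ioo a b, 0 < (Polynomial.derivative q).eval y := by
        intro y hy
        by_contra hcon
        push Not at hcon
        obtain ⟨z, hz, hz0⟩ := isPreconnected_Ioo.intermediate_value hy hx
          (Polynomial.continuous (Polynomial.derivative q)).continuousOn ⟨hcon, hx0.le⟩
        exact hne z hz hz0
      calc ∫ x in a..b, F x ≤ ∫ x in a..b, (Polynomial.derivative q).eval x *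
            (δ / (q.eval x ^ 2 + δ ^ 2)) := by
            apply intervalIntegral.integral_mono_on_of_le_Ioo hab (hii a b)
              (hcd.intervalIntegrable a b)
            intro y hy
            simp only [hF]
            rw [abs_of_pos (hall y hy)]
        _ ≤ Real.pi := by rw [hval]; linarith
    · push Not at hpos
      calc ∫ x in a..b, F x ≤ ∫ x in a..b, -((Polynomial.derivative q).eval x *
            (δ / (q.eval x ^ 2 + δ ^ 2))) := by
            apply intervalIntegral.integral_mono_on_of_le_Ioo hab (hii a b)
              (hcd.neg.intervalIntegrable a b)
            intro y hy
            simp only [hF]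
            rw [abs_of_nonpos (hpos y hy), neg_mul]
            exact le_rfl
        _ ≤ Real.pi := by rw [intervalIntegral.integral_neg, hval]; linarith
  induction k with
  | zero =>
    intro S hS a b hab h
    have hS0 : S = ∅ := Finset.card_eq_zero.mp (by omega)
    subst hS0
    have := base a b hab fun x hx h0 => by simpa using h x hx h0
    simpa using this
  | succ k ih =>
    intro S hS a b hab h
    by_cases hex : ∃ c ∈ S, c ∈ Set.Ioo a b
    · obtain ⟨c, hcS, hc⟩ := hex
      have hcard1 : (S.filter (· < c)).card + (S.filter (c < ·)).card + 1 ≤ S.card := by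
        have hdis : Disjoint (S.filter (· < c)) (S.filter (c < ·)) := by
          apply Finset.disjoint_filter.mpr
          intro x _ h1 h2
          linarith
        have hsub : (S.filter (· < c)) ∪ (S.filter (c < ·)) ⊆ S.erase c := by
          intro x hx
          simp only [Finset.mem_union, Finset.mem_filter] at hx
          rw [Finset.mem_erase]
          rcases hx with hx | hx
          · exact ⟨hx.2.ne, hx.1⟩
          · exact ⟨hx.2.ne', hx.1⟩
        have := Finset.card_le_card hsub
        rw [Finset.card_union_of_disjoint hdis, Finset.card_erase_of_mem hcS] at this
        have := Finset.card_pos.mpr ⟨c, hcS⟩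
        omega
      have h1 := ih (S.filter (· < c)) (by omega) a c hc.1.le fun x hx h0 =>
        Finset.mem_filter.mpr ⟨h x ⟨hx.1, hx.2.trans hc.2⟩ h0, hx.2⟩
      have h2 := ih (S.filter (c < ·)) (by omega) c b hc.2.le fun x hx h0 =>
        Finset.mem_filter.mpr ⟨h x ⟨hc.1.trans hx.1, hx.2⟩ h0, hx.1⟩
      rw [← intervalIntegral.integral_add_adjacent_intervals (hii a c) (hii c b)]
      have h3 : (((S.filter (· < c)).card : ℝ) + ((S.filter (c < ·)).card : ℝ) + 1) ≤ S.card := by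
        exact_mod_cast hcard1
      nlinarith [Real.pi_pos]
    · push Not at hex
      have := base a b hab fun x hx h0 => hex x (h x hx h0) hx
      have h0 : (0 : ℝ) ≤ S.card := by positivity
      nlinarith [Real.pi_pos]

lemma arctan_variation_line (q : Polynomial ℝ) {k : ℕ} (hq : q.natDegree ≤ k) {δ : ℝ}
    (hδ : 0 < δ) :
    Integrable (fun x => |(Polynomial.derivative q).eval x| * (δ / (q.eval x ^ 2 + δ ^ 2))) ∧
    ∫ x, |(Polynomial.derivative q).eval x| * (δ / (q.eval x ^ 2 + δ ^ 2)) ≤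
        Real.pi * (k + 1) := by
  have hden : ∀ x, q.eval x ^ 2 + δ ^ 2 ≠ 0 := fun x => by positivity
  have hFc : Continuous fun x => |(Polynomial.derivative q).eval x| *
      (δ / (q.eval x ^ 2 + δ ^ 2)) := by
    apply Continuous.mul (by fun_prop)
    exact Continuous.div (by fun_prop) (by fun_prop) hden
  by_cases hd : Polynomial.derivative q = 0
  · simp only [hd, Polynomial.eval_zero, abs_zero, zero_mul, integral_zero]
    exact ⟨integrable_zero _ _ _, by positivity⟩
  have hbd : ∀ n : ℕ, ∫ x in (-(n : ℝ))..n, |(Polynomial.derivative q).eval x| *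
      (δ / (q.eval x ^ 2 + δ ^ 2)) ≤ Real.pi * (k + 1) := by
    intro n
    have hn : -(n : ℝ) ≤ n := by linarith [(Nat.cast_nonneg n : (0 : ℝ) ≤ n)]
    refine (arctan_variation q hδ _ (Polynomial.derivative q).roots.toFinset le_rfl _ _ hn ?_).trans ?_
    · intro x _ hx
      rw [Multiset.mem_toFinset, Polynomial.mem_roots hd]
      exact hx
    · gcongr
      have h1 := Multiset.toFinset_card_le (Polynomial.derivative q).roots
      have h2 := Polynomial.card_roots' (Polynomial.derivative q)
      have h3 := Polynomial.natDegree_derivative_le q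
      omega
  have ha : Filter.Tendsto (fun n : ℕ => -(n : ℝ)) Filter.atTop Filter.atBot :=
    Filter.tendsto_neg_atTop_atBot.comp tendsto_natCast_atTop_atTop
  have hb : Filter.Tendsto (fun n : ℕ => (n : ℝ)) Filter.atTop Filter.atTop :=
    tendsto_natCast_atTop_atTop
  have hInt : Integrable (fun x => |(Polynomial.derivative q).eval x| *
      (δ / (q.eval x ^ 2 + δ ^ 2))) := by
    refine integrable_of_intervalIntegral_norm_bounded (Real.pi * (k + 1))
      (fun n : ℕ => hFc.integrableOn_Ioc) ha hb (Filter.Eventually.of_forall fun n => ?_)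
    refine le_of_eq_of_le ?_ (hbd n)
    congr 1
    funext x
    rw [Real.norm_of_nonneg (by positivity)]
  exact ⟨hInt, le_of_tendsto (intervalIntegral_tendsto_integral hInt ha hb)
    (Filter.Eventually.of_forall hbd)⟩

/-- The standard Gaussian density. -/
noncomputable abbrev gdens (x : ℝ) : ℝ := gaussianPDFReal 0 1 x

lemma gdens_eq (x : ℝ) : gdens x = (√(2 * Real.pi))⁻¹ * Real.exp (-(1 / 2) * x ^ 2) := by
  simp only [gaussianPDFReal, NNReal.coe_one, mul_one, sub_zero]
  congr 2
  ring

lemma gdens_hasDerivAt (x : ℝ) : HasDerivAt gdens (-x * gdens x) x := by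
  have h1 : HasDerivAt (fun x : ℝ => (√(2 * Real.pi))⁻¹ * Real.exp (-(1 / 2) * x ^ 2))
      ((√(2 * Real.pi))⁻¹ * (Real.exp (-(1 / 2) * x ^ 2) * (-(1 / 2) * (2 * x)))) x := by
    have := (((hasDerivAt_pow 2 x).const_mul (-(1 / 2) : ℝ)).exp).const_mul (√(2 * Real.pi))⁻¹
    simpa using this
  have h2 : gdens = fun x : ℝ => (√(2 * Real.pi))⁻¹ * Real.exp (-(1 / 2) * x ^ 2) :=
    funext gdens_eq
  rw [h2]
  convert h1 using 1
  simp only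
  ring

lemma gdens_nonneg (x : ℝ) : 0 ≤ gdens x := gaussianPDFReal_nonneg _ _ _

lemma gdens_le_one (x : ℝ) : gdens x ≤ 1 := by
  rw [gdens_eq]
  have hc : (√(2 * Real.pi))⁻¹ ≤ 1 := by
    apply inv_le_one_of_one_le₀
    rw [Real.one_le_sqrt]
    linarith [Real.pi_gt_three]
  have he : Real.exp (-(1 / 2) * x ^ 2) ≤ 1 := Real.exp_le_one_iff.mpr (by nlinarith [sq_nonneg x])
  calc _ ≤ (1 : ℝ) * 1 := by gcongr
    _ = 1 := one_mul 1

lemma gdens_continuous : Continuous gdens :=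
  continuous_iff_continuousAt.mpr fun x => (gdens_hasDerivAt x).continuousAt

lemma gdens_integrable : Integrable gdens := integrable_gaussianPDFReal 0 1

lemma abs_mul_gdens_integrable : Integrable fun x => |x| * gdens x := by
  have h := (integrable_mul_exp_neg_mul_sq (b := 1 / 2) (by norm_num)).abs.const_mul
    (√(2 * Real.pi))⁻¹
  refine h.congr (Filter.Eventually.of_forall fun x => ?_)
  simp only [gdens_eq, abs_mul, Real.abs_exp]
  ring

/-- The first absolute moment of the standard Gaussian law. -/
noncomputable def absMoment : ℝ := ∫ x, |x| * gdens x

lemma absMoment_nonneg : 0 ≤ absMoment :=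
  integral_nonneg fun x => mul_nonneg (abs_nonneg x) (gdens_nonneg x)

/-- Gaussian integration by parts for `φ' (p)`, regularised by the factor
`q ^ 2 / (q ^ 2 + δ ^ 2)` with `q = p'`. -/
lemma gaussian_ibp (p q : Polynomial ℝ) (hq : q = Polynomial.derivative p) {φ φ' : ℝ → ℝ}
    (hφ : ∀ s, HasDerivAt φ (φ' s) s) (hφc : Continuous φ') {ε : ℝ} (hφb : ∀ s, |φ s| ≤ ε)
    (hφb' : ∀ s, |φ' s| ≤ 1) {δ : ℝ} (hδ : 0 < δ) :
    |∫ x, φ' (p.eval x) ∂(gaussianReal 0 1)| ≤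
      ε * ((1 / δ) * ∫ x, |(Polynomial.derivative q).eval x| * (δ / (q.eval x ^ 2 + δ ^ 2))) +
      ε * (∫ x, |x| * gdens x * (|q.eval x| / (q.eval x ^ 2 + δ ^ 2))) +
      ∫ x, δ ^ 2 / (q.eval x ^ 2 + δ ^ 2) ∂(gaussianReal 0 1) := by
  have hε : 0 ≤ ε := (abs_nonneg _).trans (hφb 0)
  have hφcont : Continuous φ := continuous_iff_continuousAt.mpr fun s => (hφ s).continuousAt
  have hden : ∀ x, q.eval x ^ 2 + δ ^ 2 ≠ 0 := fun x => by positivity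
  have hden0 : ∀ x, 0 < q.eval x ^ 2 + δ ^ 2 := fun x => by positivity
  set q' := Polynomial.derivative q with hq'
  obtain ⟨hVint, -⟩ := arctan_variation_line q le_rfl hδ
  set V : ℝ → ℝ := fun x => |q'.eval x| * (δ / (q.eval x ^ 2 + δ ^ 2)) with hV
  set χ : ℝ → ℝ := fun x => q.eval x / (q.eval x ^ 2 + δ ^ 2) with hχ
  set χ' : ℝ → ℝ := fun x => q'.eval x * (δ ^ 2 - q.eval x ^ 2) / (q.eval x ^ 2 + δ ^ 2) ^ 2
    with hχ'
  have hχd : ∀ x, HasDerivAt χ (χ' x) x := by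
    intro x
    have h1 := (q.hasDerivAt x).div (((q.hasDerivAt x).pow 2).add_const (δ ^ 2)) (hden x)
    have h2 : χ' x = (q'.eval x * (q.eval x ^ 2 + δ ^ 2) -
        q.eval x * (((2 : ℕ) : ℝ) * q.eval x ^ (2 - 1) * q'.eval x)) / (q.eval x ^ 2 + δ ^ 2) ^ 2 := by
      simp only [hχ']
      congr 1
      push_cast
      ring
    rw [h2]
    exact h1
  have hχb : ∀ x, |χ x| ≤ 1 / δ := by
    intro x
    simp only [hχ]
    rw [abs_div, abs_of_pos (hden0 x), div_le_div_iff₀ (hden0 x) hδ]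
    nlinarith [sq_nonneg (|q.eval x| - δ), sq_abs (q.eval x), abs_nonneg (q.eval x)]
  have hχ'b : ∀ x, |χ' x| ≤ (1 / δ) * V x := by
    intro x
    simp only [hχ', hV]
    rw [abs_div, abs_mul, abs_of_pos (pow_pos (hden0 x) 2)]
    have h1 : |δ ^ 2 - q.eval x ^ 2| ≤ q.eval x ^ 2 + δ ^ 2 := by
      rw [abs_le]; constructor <;> nlinarith [sq_nonneg (q.eval x), sq_nonneg δ]
    calc _ ≤ |q'.eval x| * (q.eval x ^ 2 + δ ^ 2) / (q.eval x ^ 2 + δ ^ 2) ^ 2 := by gcongr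
      _ = _ := by have := hden x; field_simp
  have hχc : Continuous χ := by
    apply Continuous.div (by fun_prop) (by fun_prop) hden
  have hχ'c : Continuous χ' := by
    apply Continuous.div (by fun_prop) (by fun_prop)
    intro x; exact pow_ne_zero 2 (hden x)
  have hpc : Continuous fun x => p.eval x := p.continuous
  have hw := gdens_continuous
  have hw0 := gdens_nonneg
  have habs : ∀ x, |gdens x| = gdens x := fun x => abs_of_nonneg (hw0 x)
  have hi1 : Integrable ((fun x => φ (p.eval x)) *
      fun x => χ' x * gdens x + χ x * (-x * gdens x)) := by
    have hdom : Integrable fun x => ε * ((1 / δ) * V x + (1 / δ) * (|x| * gdens x)) :=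
      ((hVint.const_mul _).add (abs_mul_gdens_integrable.const_mul _)).const_mul _
    refine hdom.mono' ?_ (Filter.Eventually.of_forall fun x => ?_)
    · apply Continuous.aestronglyMeasurable
      apply (hφcont.comp hpc).mul
      fun_prop
    · simp only [Pi.mul_apply, Real.norm_eq_abs, abs_mul]
      have hV0 : 0 ≤ V x := by simp only [hV]; positivity
      apply mul_le_mul (hφb _) _ (abs_nonneg _) hε
      refine (abs_add_le _ _).trans ?_
      rw [abs_mul, abs_mul, abs_mul, abs_neg, habs]
      apply add_le_add
      · calc _ ≤ ((1 / δ) * V x) * 1 :=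
              mul_le_mul (hχ'b x) (gdens_le_one x) (hw0 x) (by positivity)
          _ = _ := mul_one _
      · exact mul_le_mul_of_nonneg_right (hχb x) (mul_nonneg (abs_nonneg x) (hw0 x))
  have hi2 : Integrable ((fun x => φ' (p.eval x) * q.eval x) * fun x => χ x * gdens x) := by
    refine gdens_integrable.mono' ?_ (Filter.Eventually.of_forall fun x => ?_)
    · apply Continuous.aestronglyMeasurable
      apply ((hφc.comp hpc).mul (by fun_prop)).mul
      fun_prop
    · have h1 : |q.eval x * χ x| ≤ 1 := by
        simp only [hχ]
        rw [mul_div_assoc', abs_div, abs_of_pos (hden0 x), div_le_one (hden0 x), abs_mul_self]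
        nlinarith [sq_nonneg δ]
      have h2 : ‖((fun x => φ' (p.eval x) * q.eval x) * fun x => χ x * gdens x) x‖ =
          |φ' (p.eval x)| * |q.eval x * χ x| * gdens x := by
        simp only [Pi.mul_apply, Real.norm_eq_abs, abs_mul, habs]; ring
      rw [h2]
      calc _ ≤ 1 * 1 * gdens x := by
            have := hw0 x
            gcongr
            exact hφb' _
        _ = _ := by ring
  have hi3 : Integrable ((fun x => φ (p.eval x)) * fun x => χ x * gdens x) := by
    refine (gdens_integrable.const_mul (ε * (1 / δ))).mono' ?_
      (Filter.Eventually.of_forall fun x => ?_)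
    · apply Continuous.aestronglyMeasurable
      apply (hφcont.comp hpc).mul
      fun_prop
    · simp only [Pi.mul_apply, Real.norm_eq_abs, abs_mul, habs]
      rw [← mul_assoc]
      have := hw0 x
      gcongr
      · exact hφb _
      · exact hχb x
  have hibp := integral_mul_deriv_eq_deriv_mul_of_integrable
    (u := fun x => φ (p.eval x)) (u' := fun x => φ' (p.eval x) * q.eval x)
    (v := fun x => χ x * gdens x) (v' := fun x => χ' x * gdens x + χ x * (-x * gdens x))
    (fun x _ => by rw [hq]; exact (hφ _).comp x (p.hasDerivAt x))
    (fun x _ => (hχd x).mul (gdens_hasDerivAt x)) hi1 hi2 hi3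
  have hi5 : Integrable fun x => |x| * gdens x * (|q.eval x| / (q.eval x ^ 2 + δ ^ 2)) := by
    refine (abs_mul_gdens_integrable.const_mul (1 / δ)).mono' ?_
      (Filter.Eventually.of_forall fun x => ?_)
    · apply Continuous.aestronglyMeasurable
      apply Continuous.mul (by fun_prop)
      exact Continuous.div (by fun_prop) (by fun_prop) hden
    · have h1 : |q.eval x| / (q.eval x ^ 2 + δ ^ 2) = |χ x| := by
        simp only [hχ]; rw [abs_div, abs_of_pos (hden0 x)]
      rw [h1, Real.norm_of_nonneg (mul_nonneg (mul_nonneg (abs_nonneg _) (hw0 x)) (abs_nonneg _)),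
        mul_comm]
      exact mul_le_mul_of_nonneg_right (hχb x) (mul_nonneg (abs_nonneg x) (hw0 x))
  have hleft : |∫ x, φ (p.eval x) * (χ' x * gdens x + χ x * (-x * gdens x))| ≤
      ε * ((1 / δ) * ∫ x, V x) +
      ε * (∫ x, |x| * gdens x * (|q.eval x| / (q.eval x ^ 2 + δ ^ 2))) := by
    rw [← integral_const_mul, ← integral_const_mul, ← integral_const_mul,
      ← integral_add ((hVint.const_mul _).const_mul _) (hi5.const_mul _)]
    refine (abs_integral_le_integral_abs).trans ?_
    refine integral_mono hi1.abs
      (((hVint.const_mul _).const_mul _).add (hi5.const_mul _)) fun x => ?_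
    simp only [abs_mul]
    rw [← mul_add]
    apply mul_le_mul (hφb _) _ (abs_nonneg _) hε
    refine (abs_add_le _ _).trans ?_
    rw [abs_mul, abs_mul, abs_mul, abs_neg, habs]
    have hV0 : 0 ≤ V x := by simp only [hV]; positivity
    apply add_le_add
    · calc _ ≤ ((1 / δ) * V x) * 1 :=
            mul_le_mul (hχ'b x) (gdens_le_one x) (hw0 x) (by positivity)
        _ = _ := mul_one _
    · simp only [hχ]; rw [abs_div, abs_of_pos (hden0 x), mul_comm]
  -- split `φ' (p)` into the regular part `φ' (p) q χ` and the remainder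
  have hi4 : Integrable fun x => gdens x * (φ' (p.eval x) * (δ ^ 2 / (q.eval x ^ 2 + δ ^ 2))) := by
    refine gdens_integrable.mono' ?_ (Filter.Eventually.of_forall fun x => ?_)
    · apply Continuous.aestronglyMeasurable
      apply hw.mul
      apply (hφc.comp hpc).mul
      exact Continuous.div (by fun_prop) (by fun_prop) hden
    · rw [Real.norm_eq_abs, abs_mul, abs_mul, habs, abs_of_pos (by positivity :
        0 < δ ^ 2 / (q.eval x ^ 2 + δ ^ 2))]
      have h1 : δ ^ 2 / (q.eval x ^ 2 + δ ^ 2) ≤ 1 := by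
        rw [div_le_one (hden0 x)]; nlinarith [sq_nonneg (q.eval x)]
      calc _ ≤ gdens x * (1 * 1) := by
            have := hw0 x
            gcongr
            exact hφb' _
        _ = _ := by ring
  have hi6 : Integrable fun x => gdens x * (δ ^ 2 / (q.eval x ^ 2 + δ ^ 2)) := by
    refine gdens_integrable.mono' ?_ (Filter.Eventually.of_forall fun x => ?_)
    · apply Continuous.aestronglyMeasurable
      apply hw.mul
      exact Continuous.div (by fun_prop) (by fun_prop) hden
    · have := hw0 x
      rw [Real.norm_of_nonneg (by positivity)]
      apply mul_le_of_le_one_right (hw0 x)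
      rw [div_le_one (hden0 x)]; nlinarith [sq_nonneg (q.eval x)]
  have hsplit : ∫ x, φ' (p.eval x) ∂(gaussianReal 0 1) =
      (∫ x, φ' (p.eval x) * q.eval x * (χ x * gdens x)) +
      ∫ x, gdens x * (φ' (p.eval x) * (δ ^ 2 / (q.eval x ^ 2 + δ ^ 2))) := by
    have hi2' : Integrable fun x => φ' (p.eval x) * q.eval x * (χ x * gdens x) := hi2
    rw [integral_gaussianReal_eq_integral_smul one_ne_zero, ← integral_add hi2' hi4]
    congr 1
    funext x
    simp only [smul_eq_mul, hχ]
    have := hden x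
    field_simp
  rw [hsplit]
  refine (abs_add_le _ _).trans (add_le_add ?_ ?_)
  · have h1 : (∫ x, φ' (p.eval x) * q.eval x * (χ x * gdens x)) =
        -∫ x, φ (p.eval x) * (χ' x * gdens x + χ x * (-x * gdens x)) := by
      rw [hibp, neg_neg]
    rw [h1, abs_neg]
    exact hleft
  · rw [integral_gaussianReal_eq_integral_smul one_ne_zero]
    refine (abs_integral_le_integral_abs).trans ?_
    refine integral_mono hi4.abs hi6 fun x => ?_
    simp only [smul_eq_mul]
    rw [abs_mul, abs_mul, habs, abs_of_pos (by positivity : 0 < δ ^ 2 / (q.eval x ^ 2 + δ ^ 2))]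
    apply mul_le_mul_of_nonneg_left _ (hw0 x)
    exact mul_le_of_le_one_left (by positivity) (hφb' _)

/-! ### The one-dimensional estimate -/

/-- The small ball estimate, integrated against the Cauchy-type profile `δ² / (q² + δ²)`. -/
lemma integral_cauchy_le (k : ℕ) (hk : 1 ≤ k) (q : Polynomial ℝ) (hq : q.natDegree ≤ k)
    (hq0 : q ≠ 0) {δ : ℝ} (hδ : 0 < δ) :
    ∫ x, δ ^ 2 / (q.eval x ^ 2 + δ ^ 2) ∂(gaussianReal 0 1) ≤
      2 * (16 * k * 2 ^ k) * (δ / coeffNorm q) ^ ((1 : ℝ) / k) := by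
  have hk' : (1 : ℝ) ≤ k := by exact_mod_cast hk
  have hN := coeffNorm_pos hq0
  have hden : ∀ x, q.eval x ^ 2 + δ ^ 2 ≠ 0 := fun x => by positivity
  set W : ℝ → ℝ := fun x => δ ^ 2 / (q.eval x ^ 2 + δ ^ 2) with hWdef
  have hWc : Continuous W := Continuous.div (by fun_prop) (by fun_prop) hden
  have h0 : ∀ x, 0 ≤ W x := fun x => by simp only [hWdef]; positivity
  have h1 : ∀ x, W x ≤ 1 := fun x => by
    simp only [hWdef]
    rw [div_le_one (by positivity)]; nlinarith [sq_nonneg (q.eval x)]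
  have hInt : Integrable W (gaussianReal 0 1) :=
    Integrable.of_bound hWc.aestronglyMeasurable 1
      (Filter.Eventually.of_forall fun x => by rw [Real.norm_of_nonneg (h0 x)]; exact h1 x)
  rw [hInt.integral_eq_integral_Ioc_meas_le (M := 1) (Filter.Eventually.of_forall h0)
    (Filter.Eventually.of_forall h1)]
  have hanti : Antitone fun u => (gaussianReal 0 1).real {x | u ≤ W x} := by
    intro u v huv
    exact measureReal_mono (fun x hx => huv.trans hx) (measure_ne_top _ _)
  rw [← intervalIntegral.integral_of_le zero_le_one]
  set B : ℝ := (16 * k * 2 ^ k) * (δ / coeffNorm q) ^ ((1 : ℝ) / k) with hB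
  have hval : ∫ u in (0 : ℝ)..1, B * u ^ (-(1 / 2) : ℝ) =
      2 * (16 * k * 2 ^ k) * (δ / coeffNorm q) ^ ((1 : ℝ) / k) := by
    rw [intervalIntegral.integral_const_mul, integral_rpow (Or.inl (by norm_num)), hB]
    norm_num
    ring
  rw [← hval]
  apply intervalIntegral.integral_mono_on_of_le_Ioo zero_le_one hanti.intervalIntegrable
    ((intervalIntegral.intervalIntegrable_rpow' (by norm_num)).const_mul _)
  intro u hu
  have hu0 : 0 < u := hu.1
  have hsub : {x | u ≤ W x} ⊆
      {x | |q.eval x| ≤ (δ / coeffNorm q * u ^ (-(1 / 2) : ℝ)) * coeffNorm q} := by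
    intro x hx
    simp only [Set.mem_ofPred_eq, hWdef] at hx ⊢
    rw [mul_right_comm, div_mul_cancel₀ _ hN.ne']
    rw [le_div_iff₀ (by positivity)] at hx
    have hsq : (u ^ (-(1 / 2) : ℝ)) ^ 2 = u⁻¹ := by
      rw [← Real.rpow_natCast, ← Real.rpow_mul hu0.le]
      norm_num
      rw [Real.rpow_neg_one]
    apply abs_le_of_sq_le_sq _ (by positivity)
    rw [mul_pow, hsq, ← div_eq_mul_inv, le_div_iff₀ hu0]
    nlinarith [sq_nonneg δ]
  calc _ ≤ _ := measureReal_mono hsub (measure_ne_top _ _)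
    _ ≤ (16 * k * 2 ^ k) * (δ / coeffNorm q * u ^ (-(1 / 2) : ℝ)) ^ ((1 : ℝ) / k) :=
      small_ball k hk q hq hq0 (by positivity)
    _ ≤ B * u ^ (-(1 / 2) : ℝ) := by
      rw [Real.mul_rpow (by positivity) (by positivity), hB, ← mul_assoc]
      apply mul_le_mul_of_nonneg_left _ (by positivity)
      calc (u ^ (-(1 / 2) : ℝ)) ^ ((1 : ℝ) / k) ≤ (u ^ (-(1 / 2) : ℝ)) ^ (1 : ℝ) := by
            apply Real.rpow_le_rpow_of_exponent_le
            · exact Real.one_le_rpow_of_pos_of_le_one_of_nonpos hu0 hu.2.le (by norm_num)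
            · rw [div_le_one (by linarith)]; exact hk'
        _ = _ := Real.rpow_one _

/-- The constant of the one-dimensional estimate. -/
noncomputable def univConst (m : ℕ) : ℝ :=
  Real.pi * m + absMoment + 2 * (16 * m * 2 ^ m) + 1

lemma one_le_univConst (m : ℕ) : 1 ≤ univConst m := by
  have := absMoment_nonneg
  have := Real.pi_pos
  have : 0 ≤ Real.pi * m + absMoment + 2 * (16 * m * 2 ^ m) := by positivity
  unfold univConst
  linarith

/-- The one-dimensional estimate: the derivative of a function bounded by `ε`, composed with a
polynomial of degree at most `m`, has small Gaussian average. -/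
lemma univariate_bound (m : ℕ) (hm : 1 ≤ m) (p : Polynomial ℝ) (hp : p.natDegree ≤ m)
    (hp0 : Polynomial.derivative p ≠ 0) {φ φ' : ℝ → ℝ}
    (hφ : ∀ s, HasDerivAt φ (φ' s) s) (hφc : Continuous φ') {ε : ℝ} (hε : 0 < ε)
    (hφb : ∀ s, |φ s| ≤ ε) (hφb' : ∀ s, |φ' s| ≤ 1) :
    |∫ x, φ' (p.eval x) ∂(gaussianReal 0 1)| ≤
      univConst m * (ε / coeffNorm (Polynomial.derivative p)) ^ ((1 : ℝ) / m) := by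
  set q := Polynomial.derivative p with hq
  have hN := coeffNorm_pos hp0
  set N := coeffNorm q with hNdef
  have hqd : q.natDegree ≤ m - 1 := (Polynomial.natDegree_derivative_le p).trans (by omega)
  have habs := absMoment_nonneg
  have hden : ∀ δ : ℝ, 0 < δ → ∀ x, q.eval x ^ 2 + δ ^ 2 ≠ 0 := fun δ hδ x => by positivity
  have hmom : ∀ δ B : ℝ, 0 < δ → (∀ x, |q.eval x| / (q.eval x ^ 2 + δ ^ 2) ≤ B) →
      ∫ x, |x| * gdens x * (|q.eval x| / (q.eval x ^ 2 + δ ^ 2)) ≤ absMoment * B := by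
    intro δ B hδ hB
    unfold absMoment
    rw [← integral_mul_const]
    apply integral_mono_of_nonneg
    · exact Filter.Eventually.of_forall fun x =>
        mul_nonneg (mul_nonneg (abs_nonneg _) (gdens_nonneg x)) (by positivity)
    · exact abs_mul_gdens_integrable.mul_const _
    · exact Filter.Eventually.of_forall fun x =>
        mul_le_mul_of_nonneg_left (hB x) (mul_nonneg (abs_nonneg _) (gdens_nonneg x))
  rcases Nat.lt_or_ge 1 m with h1m | h1m
  · -- the choice of `δ` that balances `ε / δ` and `(δ / N) ^ (1 / (m - 1))`
    obtain ⟨k, rfl⟩ : ∃ k, m = k + 1 := ⟨m - 1, by omega⟩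
    have hk : 1 ≤ k := by omega
    have hk0 : (0 : ℝ) < k := by exact_mod_cast hk
    set r : ℝ := (ε / N) ^ ((1 : ℝ) / (k + 1 : ℕ)) with hr
    have hr0 : 0 < r := by positivity
    set δ : ℝ := N * r ^ k with hδdef
    have hδ : 0 < δ := by positivity
    have hrpow : r ^ (k + 1) = ε / N := by
      rw [hr, one_div, Real.rpow_inv_natCast_pow (by positivity) (by omega)]
    have hεδ : ε = δ * r := by
      rw [hδdef, mul_assoc, ← pow_succ, hrpow]; field_simp
    have hδN : (δ / N) ^ ((1 : ℝ) / k) = r := by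
      rw [hδdef, mul_div_cancel_left₀ _ hN.ne', one_div, Real.pow_rpow_inv_natCast hr0.le (by omega)]
    have hibp := gaussian_ibp p q hq hφ hφc hφb hφb' hδ
    have hvar := (arctan_variation_line q (k := k) (by simpa using hqd) hδ).2
    have hcau := integral_cauchy_le k hk q (by simpa using hqd) hp0 hδ
    rw [← hNdef, hδN] at hcau
    have hmo := hmom δ (1 / δ) hδ (by
      intro x
      rw [div_le_div_iff₀ (by positivity) hδ]
      nlinarith [sq_nonneg (|q.eval x| - δ), sq_abs (q.eval x), abs_nonneg (q.eval x)])
    have h1 : ε * ((1 / δ) * ∫ x, |(Polynomial.derivative q).eval x| *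
        (δ / (q.eval x ^ 2 + δ ^ 2))) ≤ r * (Real.pi * (k + 1)) := by
      rw [← mul_assoc, hεδ, mul_one_div, mul_div_cancel_left₀ _ hδ.ne']
      exact mul_le_mul_of_nonneg_left hvar hr0.le
    have h2 : ε * (∫ x, |x| * gdens x * (|q.eval x| / (q.eval x ^ 2 + δ ^ 2))) ≤
        r * absMoment := by
      calc _ ≤ ε * (absMoment * (1 / δ)) := mul_le_mul_of_nonneg_left hmo hε.le
        _ = _ := by rw [hεδ]; field_simp
    have h3 : 2 * (16 * (k : ℝ) * 2 ^ k) ≤ 2 * (16 * ((k + 1 : ℕ) : ℝ) * 2 ^ (k + 1)) := by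
      gcongr
      · omega
      · norm_num
      · omega
    have h4 : univConst (k + 1) * r = r * (Real.pi * (k + 1)) + r * absMoment +
        2 * (16 * ((k + 1 : ℕ) : ℝ) * 2 ^ (k + 1)) * r + r := by
      unfold univConst; push_cast; ring
    rw [h4]
    nlinarith [mul_le_mul_of_nonneg_right h3 hr0.le]
  · -- an affine polynomial: `q` is a constant
    obtain rfl : m = 1 := by omega
    obtain ⟨c, hc⟩ : ∃ c, q = Polynomial.C c :=
      ⟨_, Polynomial.eq_C_of_natDegree_eq_zero (by simpa using hqd)⟩
    have hNc : N = |c| := by rw [hNdef, hc]; simp [coeffNorm]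
    set δ := √(ε * N) with hδdef
    have hδ : 0 < δ := by positivity
    have hδ2 : δ ^ 2 = ε * N := Real.sq_sqrt (by positivity)
    have hibp := gaussian_ibp p q hq hφ hφc hφb hφb' hδ
    have hc2 : c ^ 2 = N ^ 2 := by rw [hNc, sq_abs]
    have hmo := hmom δ (1 / N) hδ (by
      intro x
      rw [hc, Polynomial.eval_C, hc2, ← hNc, div_le_div_iff₀ (by positivity) hN]
      nlinarith [sq_nonneg δ])
    have h1 : ∫ x, δ ^ 2 / (q.eval x ^ 2 + δ ^ 2) ∂(gaussianReal 0 1) ≤ ε / N := by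
      simp only [hc, Polynomial.eval_C, integral_const, probReal_univ, one_smul]
      rw [hc2, hδ2, div_le_div_iff₀ (by positivity) hN]
      nlinarith [mul_pos hε hN, mul_pos (mul_pos hε hN) hε]
    have h2 : ∫ x, |(Polynomial.derivative q).eval x| * (δ / (q.eval x ^ 2 + δ ^ 2)) = 0 := by
      simp [hc]
    rw [h2, mul_zero, mul_zero, zero_add] at hibp
    rw [Nat.cast_one, div_one, Real.rpow_one]
    have h3 : ε * (∫ x, |x| * gdens x * (|q.eval x| / (q.eval x ^ 2 + δ ^ 2))) ≤
        absMoment * (ε / N) := by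
      calc _ ≤ ε * (absMoment * (1 / N)) := mul_le_mul_of_nonneg_left hmo hε.le
        _ = _ := by ring
    have h4 : absMoment + 1 ≤ univConst 1 := by
      unfold univConst; have := Real.pi_pos; push_cast; linarith
    have h5 : 0 < ε / N := by positivity
    nlinarith [mul_le_mul_of_nonneg_right h4 h5.le]

lemma abs_integral_le_one {α : Type*} [MeasurableSpace α] {μ : Measure α} [IsProbabilityMeasure μ]
    {F : α → ℝ} (hF : ∀ x, |F x| ≤ 1) : |∫ x, F x ∂μ| ≤ 1 := by
  have := norm_integral_le_of_norm_le_const (μ := μ) (f := F) (C := 1)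
    (Filter.Eventually.of_forall hF)
  simpa using this

/-- The one-dimensional estimate in terms of the weight, valid also when `p' = 0`. -/
lemma univariate_bound_weight (m : ℕ) (hm : 1 ≤ m) (p : Polynomial ℝ) (hp : p.natDegree ≤ m)
    {φ φ' : ℝ → ℝ} (hφ : ∀ s, HasDerivAt φ (φ' s) s) (hφc : Continuous φ') {ε a : ℝ} (hε : 0 < ε)
    (hφb : ∀ s, |φ s| ≤ ε) (hφb' : ∀ s, |φ' s| ≤ 1) :
    |∫ x, φ' (p.eval x) ∂(gaussianReal 0 1)| ≤
      univConst m * weight m ε a (coeffNorm (Polynomial.derivative p)) := by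
  have hU := one_le_univConst m
  by_cases hN : coeffNorm (Polynomial.derivative p) ≤ ε
  · rw [weight_eq_one hε hN, mul_one]
    exact (abs_integral_le_one fun x => hφb' _).trans hU
  · push Not at hN
    have hp0 : Polynomial.derivative p ≠ 0 := by
      intro h; rw [h] at hN; simp [coeffNorm] at hN; linarith
    refine (univariate_bound m hm p hp hp0 hφ hφc hε hφb hφb').trans ?_
    exact mul_le_mul_of_nonneg_left (rpow_le_weight hε hN.le) (by linarith)

/-! ### Resampling one component of a Gaussian vector -/

instance (n : ℕ) : IsProbabilityMeasure (_root_.stdGaussian n) := by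
  unfold _root_.stdGaussian; infer_instance

/-- Replaces the component of `x` along `v` by the number `z`. -/
noncomputable def resample {n : ℕ} (v : Fin n → ℝ) : (Fin n → ℝ) × ℝ →L[ℝ] (Fin n → ℝ) :=
  ContinuousLinearMap.fst ℝ _ _ +
    (ContinuousLinearMap.snd ℝ (Fin n → ℝ) ℝ - ∑ i, v i •
      (ContinuousLinearMap.proj i).comp (ContinuousLinearMap.fst ℝ (Fin n → ℝ) ℝ)).smulRight v

lemma resample_apply {n : ℕ} (v x : Fin n → ℝ) (z : ℝ) :
    resample v (x, z) = (x - (∑ i, v i * x i) • v) + z • v := by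
  ext j
  simp [resample]
  ring

lemma charFunDual_gaussianReal (L : StrongDual ℝ ℝ) :
    charFunDual (gaussianReal 0 1) L = Complex.exp (-((L 1 ^ 2 / 2 : ℝ) : ℂ)) := by
  have h : charFunDual (gaussianReal 0 1) L = charFun (gaussianReal 0 1) (L 1) := by
    rw [charFunDual_apply, charFun_apply_real]
    congr 1
    funext x
    have : L x = L 1 * x := by
      conv_lhs => rw [← mul_one x, ← smul_eq_mul, map_smul, smul_eq_mul, mul_comm]
    rw [this]
    push_cast
    rfl
  rw [h, charFun_gaussianReal]
  congr 1
  push_cast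
  ring

lemma charFunDual_stdGaussian' {n : ℕ} (L : StrongDual ℝ (Fin n → ℝ)) :
    charFunDual (_root_.stdGaussian n) L =
      Complex.exp (-(((∑ i, L (Pi.single i 1) ^ 2) / 2 : ℝ) : ℂ)) := by
  unfold _root_.stdGaussian
  rw [charFunDual_pi]
  simp_rw [charFunDual_gaussianReal]
  rw [← Complex.exp_sum]
  congr 1
  rw [Finset.sum_div]
  push_cast
  rw [Finset.sum_neg_distrib]
  simp

/-- The standard Gaussian law is invariant under resampling its component along a unit vector. -/
lemma map_resample {n : ℕ} (v : Fin n → ℝ) (hv : ∑ i, v i ^ 2 = 1) :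
    ((_root_.stdGaussian n).prod (gaussianReal 0 1)).map (resample v) = _root_.stdGaussian n := by
  have : IsProbabilityMeasure
      (((_root_.stdGaussian n).prod (gaussianReal 0 1)).map (resample v)) :=
    Measure.isProbabilityMeasure_map (by fun_prop)
  apply Measure.ext_of_charFunDual
  funext L
  rw [charFunDual_map, charFunDual_prod, charFunDual_stdGaussian', charFunDual_stdGaussian',
    charFunDual_gaussianReal, ← Complex.exp_add]
  congr 1
  rw [← Complex.ofReal_neg, ← Complex.ofReal_neg, ← Complex.ofReal_neg, ← Complex.ofReal_add]
  congr 1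
  have hLv : L v = ∑ i, v i * L (Pi.single i 1) := by
    conv_lhs => rw [pi_eq_sum_univ' v]
    rw [map_sum]
    exact Finset.sum_congr rfl fun i _ => by rw [map_smul, smul_eq_mul]
  have h1 : ∀ i, (L.comp (resample v)).comp (ContinuousLinearMap.inl ℝ (Fin n → ℝ) ℝ)
      (Pi.single i 1) = L (Pi.single i 1) - v i * L v := by
    intro i
    simp only [ContinuousLinearMap.comp_apply, ContinuousLinearMap.inl_apply, resample_apply,
      zero_smul, add_zero, map_sub, map_smul, smul_eq_mul]
    congr 2
    simp [Pi.single_apply]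
  have h2 : (L.comp (resample v)).comp (ContinuousLinearMap.inr ℝ (Fin n → ℝ) ℝ) 1 = L v := by
    simp only [ContinuousLinearMap.comp_apply, ContinuousLinearMap.inr_apply, resample_apply]
    simp
  simp_rw [h1, h2]
  have h3 : ∑ i, (L (Pi.single i 1) - v i * L v) ^ 2 =
      ∑ i, L (Pi.single i 1) ^ 2 - 2 * L v * (∑ i, v i * L (Pi.single i 1)) +
        L v ^ 2 * ∑ i, v i ^ 2 := by
    rw [Finset.mul_sum, Finset.mul_sum, ← Finset.sum_sub_distrib, ← Finset.sum_add_distrib]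
    exact Finset.sum_congr rfl fun i _ => by ring
  rw [h3, ← hLv, hv]
  ring

/-- Fubini form of the resampling identity. -/
lemma integral_resample {n : ℕ} (v : Fin n → ℝ) (hv : ∑ i, v i ^ 2 = 1) {Ψ : (Fin n → ℝ) → ℝ}
    (hΨ : Measurable Ψ) {M : ℝ} (hM : ∀ x, |Ψ x| ≤ M) :
    ∫ x, Ψ x ∂(_root_.stdGaussian n) =
      ∫ x, (∫ z, Ψ ((x - (∑ i, v i * x i) • v) + z • v) ∂(gaussianReal 0 1))
        ∂(_root_.stdGaussian n) := by
  conv_lhs => rw [← map_resample v hv]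
  rw [integral_map (by fun_prop) hΨ.aestronglyMeasurable, integral_prod]
  · simp_rw [resample_apply]
  · exact Integrable.of_bound (hΨ.comp (by fun_prop)).aestronglyMeasurable M
      (Filter.Eventually.of_forall fun x => hM _)

/-! ### Restriction of polynomials to lines -/

/-- The restriction of a polynomial to the line `t ↦ y + t v`. -/
noncomputable def linePoly {n : ℕ} (y v : Fin n → ℝ) (g : MvPolynomial (Fin n) ℝ) :
    Polynomial ℝ :=
  MvPolynomial.aeval (fun i => Polynomial.C (y i) + Polynomial.C (v i) * Polynomial.X) g

lemma linePoly_eval {n : ℕ} (y v : Fin n → ℝ) (g : MvPolynomial (Fin n) ℝ) (t : ℝ) :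
    (linePoly y v g).eval t = MvPolynomial.eval (y + t • v) g := by
  unfold linePoly
  induction g using MvPolynomial.induction_on with
  | C a => simp
  | add p q hp hq => simp [hp, hq]
  | mul_X p i hp => simp [hp]; left; ring

lemma linePoly_sum {n : ℕ} (y v : Fin n → ℝ) (g : MvPolynomial (Fin n) ℝ) :
    linePoly y v g = ∑ k ∈ g.support, Polynomial.C (g.coeff k) *
      ∏ i, (Polynomial.C (y i) + Polynomial.C (v i) * Polynomial.X) ^ k i := by
  unfold linePoly
  rw [MvPolynomial.aeval_def, MvPolynomial.eval₂_eq']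
  rfl

lemma natDegree_line_prod {n : ℕ} (y v : Fin n → ℝ) (k : Fin n →₀ ℕ) :
    (∏ i, (Polynomial.C (y i) + Polynomial.C (v i) * Polynomial.X) ^ k i).natDegree ≤
      k.degree := by
  rw [Finsupp.degree_eq_sum]
  refine (Polynomial.natDegree_prod_le _ _).trans (Finset.sum_le_sum fun i _ => ?_)
  refine (Polynomial.natDegree_pow_le_of_le (k i) (m := 1) ?_).trans (by simp)
  compute_degree

lemma natDegree_linePoly_le {n : ℕ} (y v : Fin n → ℝ) {g : MvPolynomial (Fin n) ℝ} {D : ℕ}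
    (hg : ∀ k ∈ g.support, k.degree ≤ D) : (linePoly y v g).natDegree ≤ D := by
  rw [linePoly_sum]
  refine Polynomial.natDegree_sum_le_of_forall_le _ _ fun k hk => ?_
  exact (Polynomial.natDegree_C_mul_le _ _).trans ((natDegree_line_prod y v k).trans (hg k hk))

lemma natDegree_linePoly_single_le {n : ℕ} (y : Fin n → ℝ) (i : Fin n)
    {g : MvPolynomial (Fin n) ℝ} {m : ℕ} (hg : ∀ k ∈ g.support, k i ≤ m) :
    (linePoly y (Pi.single i 1) g).natDegree ≤ m := by
  rw [linePoly_sum]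
  refine Polynomial.natDegree_sum_le_of_forall_le _ _ fun k hk => ?_
  refine (Polynomial.natDegree_C_mul_le _ _).trans (le_trans ?_ (hg k hk))
  refine (Polynomial.natDegree_prod_le _ _).trans ?_
  rw [Finset.sum_eq_single i]
  · refine (Polynomial.natDegree_pow_le_of_le (k i) (m := 1) ?_).trans (by simp)
    compute_degree
  · intro j _ hj
    rw [Pi.single_eq_of_ne hj, Polynomial.C_0, zero_mul, add_zero, ← Polynomial.C_pow,
      Polynomial.natDegree_C]
  · intro h; exact absurd (Finset.mem_univ i) h

lemma derivative_linePoly {n : ℕ} (y : Fin n → ℝ) (i : Fin n) (g : MvPolynomial (Fin n) ℝ) :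
    Polynomial.derivative (linePoly y (Pi.single i 1) g) =
      linePoly y (Pi.single i 1) (MvPolynomial.pderiv i g) := by
  unfold linePoly
  induction g using MvPolynomial.induction_on with
  | C a => simp
  | add p q hp hq => simp [hp, hq]
  | mul_X p j hp =>
    rw [map_mul, Polynomial.derivative_mul, hp, Derivation.leibniz, MvPolynomial.pderiv_X]
    by_cases hij : i = j
    · subst hij
      simp
      ring
    · simp [Ne.symm hij]
      ring

lemma coeff_line_prod {n : ℕ} (y v : Fin n → ℝ) (k : Fin n →₀ ℕ) :
    (∏ i, (Polynomial.C (y i) + Polynomial.C (v i) * Polynomial.X) ^ k i).coeff k.degree =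
      ∏ i, v i ^ k i := by
  rw [Finsupp.degree_eq_sum]
  have hlin : ∀ i, (Polynomial.C (y i) + Polynomial.C (v i) * Polynomial.X).natDegree ≤ 1 := by
    intro i; compute_degree
  have hpow : ∀ i, ((Polynomial.C (y i) + Polynomial.C (v i) * Polynomial.X) ^ k i).natDegree ≤
      k i := fun i => (Polynomial.natDegree_pow_le_of_le (k i) (hlin i)).trans (by simp)
  have key : ∀ s : Finset (Fin n),
      (∏ i ∈ s, (Polynomial.C (y i) + Polynomial.C (v i) * Polynomial.X) ^ k i).coeff
        (∑ i ∈ s, k i) = ∏ i ∈ s, v i ^ k i := by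
    intro s
    induction s using Finset.induction_on with
    | empty => simp
    | insert a s ha ih =>
      rw [Finset.prod_insert ha, Finset.sum_insert ha, Finset.prod_insert ha,
        Polynomial.coeff_mul_add_eq_of_natDegree_le (hpow a), ih]
      · congr 1
        have := Polynomial.coeff_pow_of_natDegree_le (m := k a) (hlin a)
        rw [mul_one] at this
        rw [this]
        simp
      · exact (Polynomial.natDegree_prod_le _ _).trans (Finset.sum_le_sum fun i _ => hpow i)
  exact key Finset.univ

/-- The top coefficient along a line is the value of the top homogeneous part in its direction. -/
lemma coeff_linePoly {n : ℕ} (y v : Fin n → ℝ) {g : MvPolynomial (Fin n) ℝ} {D : ℕ}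
    (hg : ∀ k ∈ g.support, k.degree ≤ D) :
    (linePoly y v g).coeff D = MvPolynomial.eval v (MvPolynomial.homogeneousComponent D g) := by
  rw [linePoly_sum, Polynomial.finsetSum_coeff, MvPolynomial.homogeneousComponent_apply, map_sum,
    Finset.sum_filter]
  refine Finset.sum_congr rfl fun k hk => ?_
  rw [Polynomial.coeff_C_mul]
  split_ifs with h
  · rw [MvPolynomial.eval_monomial, ← h, coeff_line_prod, Finsupp.prod_fintype _ _ (by simp)]
  · rw [Polynomial.coeff_eq_zero_of_natDegree_lt, mul_zero]
    exact (natDegree_line_prod y v k).trans_lt (lt_of_le_of_ne (hg k hk) h)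

lemma eval_smul_homogeneousComponent {n : ℕ} (c : ℝ) (v : Fin n → ℝ)
    (g : MvPolynomial (Fin n) ℝ) (D : ℕ) :
    MvPolynomial.eval (c • v) (MvPolynomial.homogeneousComponent D g) =
      c ^ D * MvPolynomial.eval v (MvPolynomial.homogeneousComponent D g) := by
  rw [MvPolynomial.homogeneousComponent_apply, map_sum, map_sum, Finset.mul_sum]
  refine Finset.sum_congr rfl fun k hk => ?_
  rw [Finset.mem_filter] at hk
  rw [MvPolynomial.eval_monomial, MvPolynomial.eval_monomial, Finsupp.prod_fintype _ _ (by simp),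
    Finsupp.prod_fintype _ _ (by simp), ← hk.2, Finsupp.degree_eq_sum, ← Finset.prod_pow_eq_pow_sum]
  simp only [Pi.smul_apply, smul_eq_mul, mul_pow, Finset.prod_mul_distrib]
  ring

lemma support_pderiv {n : ℕ} {g : MvPolynomial (Fin n) ℝ} {i : Fin n} {k : Fin n →₀ ℕ}
    (hk : k ∈ (MvPolynomial.pderiv i g).support) : k + Finsupp.single i 1 ∈ g.support := by
  rw [MvPolynomial.mem_support_iff, MvPolynomial.coeff_pderiv] at hk
  rw [MvPolynomial.mem_support_iff]
  exact left_ne_zero_of_mul hk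

lemma pderiv_exponent_le {n m : ℕ} {g : MvPolynomial (Fin n) ℝ} (i : Fin n)
    (hg : ∀ k ∈ g.support, ∀ j, k j ≤ m) :
    ∀ k ∈ (MvPolynomial.pderiv i g).support, ∀ j, k j ≤ m := by
  intro k hk j
  have := hg _ (support_pderiv hk) j
  rw [Finsupp.add_apply] at this
  omega

lemma pderiv_degree_le {n D : ℕ} {g : MvPolynomial (Fin n) ℝ} (i : Fin n)
    (hg : ∀ k ∈ g.support, k.degree ≤ D + 1) :
    ∀ k ∈ (MvPolynomial.pderiv i g).support, k.degree ≤ D := by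
  intro k hk
  have := hg _ (support_pderiv hk)
  rw [map_add, Finsupp.degree_single] at this
  omega

/-- Differentiating in a variable that occurs in the monomial `j` does not decrease the
coefficient. -/
lemma exists_pderiv_coeff {n r : ℕ} (g : MvPolynomial (Fin n) ℝ) (j : Fin n →₀ ℕ)
    (hj : j.degree = r + 1) : ∃ i, ∃ j' : Fin n →₀ ℕ, j'.degree = r ∧
      |g.coeff j| ≤ |(MvPolynomial.pderiv i g).coeff j'| := by
  have hne : ∃ i, j i ≠ 0 := by
    by_contra h
    push Not at h
    have : j = 0 := Finsupp.ext h
    rw [this] at hj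
    simp at hj
  obtain ⟨i, hi⟩ := hne
  have hadd : (j - Finsupp.single i 1) + Finsupp.single i 1 = j := by
    apply tsub_add_cancel_of_le
    rw [Finsupp.single_le_iff]
    omega
  refine ⟨i, j - Finsupp.single i 1, ?_, ?_⟩
  · have := congrArg Finsupp.degree hadd
    rw [map_add, Finsupp.degree_single, hj] at this
    omega
  · rw [MvPolynomial.coeff_pderiv, hadd, abs_mul]
    apply le_mul_of_one_le_right (abs_nonneg _)
    have : (0 : ℝ) ≤ (((j - Finsupp.single i 1 : Fin n →₀ ℕ) i : ℕ) : ℝ) := Nat.cast_nonneg _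
    rw [abs_of_nonneg (by linarith)]
    linarith

/-! ### A good direction -/

/-- The coefficients of a polynomial of bounded degree are controlled by its values on
`[-1, 1]`. -/
lemma exists_coeffNorm_le (m : ℕ) (hm : 1 ≤ m) : ∃ B : ℝ, 1 ≤ B ∧ ∀ p : Polynomial ℝ,
    p.natDegree ≤ m → ∃ x : ℝ, |x| ≤ 1 ∧ coeffNorm p ≤ B * |p.eval x| := by
  have hm' : (1 : ℝ) ≤ m := by exact_mod_cast hm
  set A : ℝ := 16 * m * 2 ^ m with hA
  have hA0 : 0 < A := by positivity
  have hu := unitMass_pos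
  set s : ℝ := (unitMass / (2 * A)) ^ m with hs
  have hs0 : 0 < s := by positivity
  refine ⟨max 1 s⁻¹, le_max_left _ _, fun p hp => ?_⟩
  by_cases hp0 : p = 0
  · exact ⟨0, by simp, by simp [hp0, coeffNorm]⟩
  by_contra hcon
  push Not at hcon
  have hsub : Set.Icc (-1 : ℝ) 1 ⊆ {x : ℝ | |p.eval x| ≤ s * coeffNorm p} := by
    intro x hx
    have h1 := hcon x (abs_le.mpr hx)
    have h2 : s⁻¹ * |p.eval x| ≤ coeffNorm p :=
      (mul_le_mul_of_nonneg_right (le_max_right _ _) (abs_nonneg _)).trans h1.le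
    rw [Set.mem_ofPred_eq]
    rwa [inv_mul_le_iff₀ hs0] at h2
  have h3 : unitMass ≤ A * s ^ ((1 : ℝ) / m) :=
    (measureReal_mono hsub (measure_ne_top _ _)).trans (small_ball m hm p hp hp0 hs0)
  rw [hs, one_div, Real.pow_rpow_inv_natCast (by positivity) (by omega)] at h3
  have h4 : A * (unitMass / (2 * A)) = unitMass / 2 := by field_simp
  linarith

/-- Every coefficient of a polynomial of bounded degree is controlled by one of its values at a
point of controlled size. -/
lemma exists_point {m : ℕ} {B : ℝ} (hB1 : 1 ≤ B) (hB : ∀ p : Polynomial ℝ,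
    p.natDegree ≤ m → ∃ x : ℝ, |x| ≤ 1 ∧ coeffNorm p ≤ B * |p.eval x|) {n : ℕ} (r : ℕ) :
    ∀ (g : MvPolynomial (Fin n) ℝ) (j : Fin n →₀ ℕ), (∀ k ∈ g.support, k.degree ≤ m) →
      j.degree = r → ∃ w : Fin n → ℝ, ∑ i, |w i| ≤ r ∧
        |g.coeff j| ≤ B ^ r * |MvPolynomial.eval w g| := by
  induction r with
  | zero =>
    intro g j _ hj
    rw [Finsupp.degree_eq_zero_iff] at hj
    subst hj
    refine ⟨0, by simp, ?_⟩
    rw [pow_zero, one_mul, MvPolynomial.eval_zero, MvPolynomial.constantCoeff_eq]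
  | succ r ih =>
    intro g j hg hj
    obtain ⟨i, j', hj', hco⟩ := exists_pderiv_coeff g j hj
    obtain ⟨w, hw, hwv⟩ := ih (MvPolynomial.pderiv i g) j'
      (pderiv_degree_le i fun k hk => (hg k hk).trans (Nat.le_succ m)) hj'
    set p := linePoly w (Pi.single i 1) g with hp
    obtain ⟨x, hx, hxp⟩ := hB p (natDegree_linePoly_le _ _ hg)
    refine ⟨w + x • Pi.single i 1, ?_, ?_⟩
    · calc ∑ l, |(w + x • (Pi.single i 1 : Fin n → ℝ)) l|
          ≤ ∑ l, (|w l| + |x| * (Pi.single i 1 : Fin n → ℝ) l) := by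
            refine Finset.sum_le_sum fun l _ => (abs_add_le _ _).trans ?_
            rw [Pi.smul_apply, smul_eq_mul, abs_mul]
            by_cases hl : l = i
            · subst hl; simp
            · simp [hl]
        _ = ∑ l, |w l| + |x| := by
            rw [Finset.sum_add_distrib, ← Finset.mul_sum]; simp
        _ ≤ _ := by push_cast; linarith
    · have h1 : MvPolynomial.eval w (MvPolynomial.pderiv i g) = p.coeff 1 := by
        have := linePoly_eval w (Pi.single i 1) (MvPolynomial.pderiv i g) 0
        rw [← derivative_linePoly, zero_smul, add_zero, ← Polynomial.coeff_zero_eq_eval_zero,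
          Polynomial.coeff_derivative] at this
        rw [← this]; simp [hp]
      rw [← linePoly_eval]
      calc |g.coeff j| ≤ B ^ r * |MvPolynomial.eval w (MvPolynomial.pderiv i g)| := hco.trans hwv
        _ ≤ B ^ r * (B * |p.eval x|) := by
          rw [h1]
          gcongr
          exact (abs_coeff_le_coeffNorm p 1).trans hxp
        _ = _ := by ring

/-- A unit direction in which the top homogeneous part is comparable to a given coefficient. -/
lemma exists_direction (m : ℕ) (hm : 1 ≤ m) : ∃ A : ℝ, 1 ≤ A ∧
    ∀ (n D : ℕ) (g : MvPolynomial (Fin n) ℝ) (j : Fin n →₀ ℕ), 1 ≤ D → D ≤ m →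
      j.degree = D → g.coeff j ≠ 0 →
      ∃ v : Fin n → ℝ, ∑ i, v i ^ 2 = 1 ∧
        |g.coeff j| ≤ A * |MvPolynomial.eval v (MvPolynomial.homogeneousComponent D g)| := by
  obtain ⟨B, hB1, hB⟩ := exists_coeffNorm_le m hm
  have hm' : (1 : ℝ) ≤ m := by exact_mod_cast hm
  have hBm : 1 ≤ B * m := by nlinarith
  refine ⟨(B * m) ^ m, one_le_pow₀ hBm, fun n D g j hD hDm hj hne => ?_⟩
  set h := MvPolynomial.homogeneousComponent D g with hh
  have hcoeff : h.coeff j = g.coeff j := by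
    rw [hh, MvPolynomial.coeff_homogeneousComponent, if_pos hj]
  obtain ⟨w, hw, hwv⟩ := exists_point hB1 hB D h j (by
    intro k hk
    rw [MvPolynomial.mem_support_iff, hh, MvPolynomial.coeff_homogeneousComponent] at hk
    by_contra hcon
    rw [if_neg (by omega)] at hk
    exact hk rfl) hj
  rw [hcoeff] at hwv
  have hsum0 : (0 : ℝ) ≤ ∑ i, w i ^ 2 := Finset.sum_nonneg fun i _ => sq_nonneg _
  set R := √(∑ i, w i ^ 2) with hR
  have hR2 : R ^ 2 = ∑ i, w i ^ 2 := Real.sq_sqrt hsum0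
  have hRpos : 0 < R := by
    rw [hR, Real.sqrt_pos]
    refine lt_of_le_of_ne hsum0 fun h0 => ?_
    have hw0 : w = 0 := by
      funext i
      have := (Finset.sum_eq_zero_iff_of_nonneg fun i _ => sq_nonneg (w i)).mp h0.symm i
        (Finset.mem_univ i)
      simpa using this
    have h1 := eval_smul_homogeneousComponent 0 w g D
    rw [zero_smul, zero_pow (by omega), zero_mul] at h1
    rw [hw0, hh, h1, abs_zero, mul_zero] at hwv
    exact hne (abs_nonpos_iff.mp hwv)
  have hRD : R ≤ m := by
    have hDm' : (D : ℝ) ≤ m := by exact_mod_cast hDm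
    refine le_trans ?_ (hw.trans hDm')
    rw [hR, Real.sqrt_le_left (Finset.sum_nonneg fun i _ => abs_nonneg _)]
    calc ∑ i, w i ^ 2 = ∑ i, |w i| ^ 2 := by simp
      _ ≤ _ := Finset.sum_sq_le_sq_sum_of_nonneg fun i _ => abs_nonneg _
  refine ⟨R⁻¹ • w, ?_, ?_⟩
  · simp only [Pi.smul_apply, smul_eq_mul, mul_pow]
    rw [← Finset.mul_sum, ← hR2]
    field_simp
  · have h1 := eval_smul_homogeneousComponent R (R⁻¹ • w) g D
    rw [smul_smul, mul_inv_cancel₀ hRpos.ne', one_smul, ← hh] at h1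
    rw [h1, abs_mul, abs_of_pos (pow_pos hRpos D), ← mul_assoc, ← mul_pow] at hwv
    refine hwv.trans (mul_le_mul_of_nonneg_right ?_ (abs_nonneg _))
    calc (B * R) ^ D ≤ (B * m) ^ D := by gcongr
      _ ≤ (B * m) ^ m := pow_le_pow_right₀ hBm hDm

/-! ### The multivariate estimate -/

/-- Averages along all lines in the direction `v` control the full Gaussian average. -/
lemma integral_le_of_lines {n : ℕ} (v : Fin n → ℝ) (hv : ∑ i, v i ^ 2 = 1)
    {Ψ Φ : (Fin n → ℝ) → ℝ} (hΨ : Measurable Ψ) (hΦ : Measurable Φ) {M : ℝ}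
    (hΨM : ∀ x, |Ψ x| ≤ M) (hΦM : ∀ x, |Φ x| ≤ M) {c : ℝ}
    (h : ∀ y : Fin n → ℝ, |∫ z, Ψ (y + z • v) ∂(gaussianReal 0 1)| ≤
      c * ∫ z, Φ (y + z • v) ∂(gaussianReal 0 1)) :
    |∫ x, Ψ x ∂(_root_.stdGaussian n)| ≤ c * ∫ x, Φ x ∂(_root_.stdGaussian n) := by
  rw [integral_resample v hv hΨ hΨM, integral_resample v hv hΦ hΦM, ← integral_const_mul]
  rw [← Real.norm_eq_abs]
  have hInt : Integrable (fun p : (Fin n → ℝ) × ℝ => Φ (resample v p))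
      ((_root_.stdGaussian n).prod (gaussianReal 0 1)) :=
    Integrable.of_bound (hΦ.comp (by fun_prop)).aestronglyMeasurable M
      (Filter.Eventually.of_forall fun x => hΦM _)
  have hInt2 := hInt.integral_prod_left
  simp_rw [resample_apply] at hInt2
  exact norm_integral_le_of_norm_le (hInt2.const_mul c)
    (Filter.Eventually.of_forall fun x => h _)

lemma integral_le_of_lines_const {n : ℕ} (v : Fin n → ℝ) (hv : ∑ i, v i ^ 2 = 1)
    {Ψ : (Fin n → ℝ) → ℝ} (hΨ : Measurable Ψ) (hΨM : ∀ x, |Ψ x| ≤ 1) {c : ℝ}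
    (h : ∀ y : Fin n → ℝ, |∫ z, Ψ (y + z • v) ∂(gaussianReal 0 1)| ≤ c) :
    |∫ x, Ψ x ∂(_root_.stdGaussian n)| ≤ c := by
  have := integral_le_of_lines v hv hΨ (measurable_const (a := (1 : ℝ))) hΨM (by simp) (c := c)
    (by simpa using h)
  simpa using this

lemma sum_single_sq {n : ℕ} (i : Fin n) : ∑ l, (Pi.single i 1 : Fin n → ℝ) l ^ 2 = 1 := by
  rw [Finset.sum_eq_single i] <;> simp +contextual

lemma measurable_eval {n : ℕ} (g : MvPolynomial (Fin n) ℝ) :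
    Measurable fun x : Fin n → ℝ => MvPolynomial.eval x g :=
  (MvPolynomial.continuous_eval g).measurable

lemma abs_weight_le_one {m : ℕ} {ε a : ℝ} (hε : 0 < ε) (y : ℝ) : |weight m ε a y| ≤ 1 := by
  rw [abs_of_nonneg (weight_nonneg hε y)]; exact weight_le_one hε y

lemma measurable_weight_eval {n m : ℕ} {ε a : ℝ} (g : MvPolynomial (Fin n) ℝ) :
    Measurable fun x : Fin n → ℝ => weight m ε a |MvPolynomial.eval x g| :=
  weight_measurable.comp (measurable_eval g).abs

/-- Replacing a polynomial by a partial derivative inside the weight costs one logarithm. -/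
lemma weight_peel (m : ℕ) (hm : 1 ≤ m) {n : ℕ} (g : MvPolynomial (Fin n) ℝ) (i : Fin n)
    (hg : ∀ k ∈ g.support, ∀ j, k j ≤ m) {ε a : ℝ} (hε : 0 < ε) (hεa : ε ≤ a) :
    ∫ x, weight m ε a |MvPolynomial.eval x g| ∂(_root_.stdGaussian n) ≤
      ((16 * m * 2 ^ m) * ((m * (m + 1)) * unitMass⁻¹)) * (1 + Real.log (a / ε)) *
      ∫ x, weight m ε a |MvPolynomial.eval x (MvPolynomial.pderiv i g)|
        ∂(_root_.stdGaussian n) := by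
  have hL : 0 ≤ Real.log (a / ε) := Real.log_nonneg (by rwa [one_le_div hε])
  refine (le_abs_self _).trans (integral_le_of_lines (Pi.single i 1) (sum_single_sq i)
    (measurable_weight_eval _) (measurable_weight_eval _) (fun x => abs_weight_le_one hε _)
    (fun x => abs_weight_le_one hε _) fun y => ?_)
  rw [abs_of_nonneg (integral_nonneg fun z => weight_nonneg hε _)]
  simp_rw [← linePoly_eval, ← derivative_linePoly]
  have hdeg := natDegree_linePoly_single_le y i (g := g) (m := m) fun k hk => hg k hk i
  refine (integral_weight_le m hm _ hdeg hε hεa).trans ?_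
  calc _ ≤ (16 * m * 2 ^ m) * (1 + Real.log (a / ε)) * _ :=
        mul_le_mul_of_nonneg_left
          (weight_coeffNorm_le_derivative m hm _ hdeg hε (hε.trans_le hεa)) (by positivity)
    _ = _ := by ring

lemma weight_le_of_coeff {m : ℕ} (hm : 1 ≤ m) {ε a A y : ℝ} (hε : 0 < ε) (hεa : ε ≤ a)
    (hA : 1 ≤ A) (hy : a ≤ A * y) : weight m ε a y ≤ A * (ε / a) ^ ((1 : ℝ) / m) := by
  rw [← weight_of_le hεa hy]
  exact weight_le_mul hm hε (hε.trans_le hεa) hA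

/-- The weighted average of a polynomial of degree `m + r` with a large top coefficient. -/
lemma weight_chain (m : ℕ) (hm : 1 ≤ m) : ∃ K : ℝ, 1 ≤ K ∧ ∀ (n r : ℕ)
    (g : MvPolynomial (Fin n) ℝ) (j : Fin n →₀ ℕ), (∀ k ∈ g.support, ∀ l, k l ≤ m) →
    (∀ k ∈ g.support, k.degree ≤ m + r) → j.degree = m + r →
    ∀ ε a : ℝ, 0 < ε → ε ≤ a → a ≤ |g.coeff j| →
    ∫ x, weight m ε a |MvPolynomial.eval x g| ∂(_root_.stdGaussian n) ≤
      (K * (1 + Real.log (a / ε))) ^ (r + 1) * (ε / a) ^ ((1 : ℝ) / m) := by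
  obtain ⟨A, hA1, hA⟩ := exists_direction m hm
  have hm' : (1 : ℝ) ≤ m := by exact_mod_cast hm
  have hu := unitMass_pos
  set K1 : ℝ := (16 * m * 2 ^ m) * A with hK1
  set K2 : ℝ := (16 * m * 2 ^ m) * ((m * (m + 1)) * unitMass⁻¹) with hK2
  refine ⟨max 1 (max K1 K2), le_max_left _ _, fun n r => ?_⟩
  set K := max 1 (max K1 K2) with hK
  have hK1K : K1 ≤ K := (le_max_left _ _).trans (le_max_right _ _)
  have hK2K : K2 ≤ K := (le_max_right _ _).trans (le_max_right _ _)
  induction r with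
  | zero =>
    intro g j _ hdeg hj ε a hε hεa ha
    have hL : 0 ≤ Real.log (a / ε) := Real.log_nonneg (by rwa [one_le_div hε])
    have ha0 : 0 < a := hε.trans_le hεa
    rw [add_zero] at hdeg hj
    obtain ⟨v, hv, hvA⟩ := hA n m g j hm le_rfl hj (abs_pos.mp (ha0.trans_le ha))
    refine (le_abs_self _).trans (integral_le_of_lines_const v hv
      (measurable_weight_eval _) (fun x => abs_weight_le_one hε _) fun y => ?_)
    rw [abs_of_nonneg (integral_nonneg fun z => weight_nonneg hε _)]
    simp_rw [← linePoly_eval]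
    refine (integral_weight_le m hm _ (natDegree_linePoly_le y v hdeg) hε hεa).trans ?_
    have h1 : weight m ε a (coeffNorm (linePoly y v g)) ≤ A * (ε / a) ^ ((1 : ℝ) / m) := by
      apply weight_le_of_coeff hm hε hεa hA1
      rw [← coeff_linePoly y v hdeg] at hvA
      exact (ha.trans hvA).trans
        (mul_le_mul_of_nonneg_left (abs_coeff_le_coeffNorm _ _) (by linarith))
    calc _ ≤ (16 * m * 2 ^ m) * (1 + Real.log (a / ε)) * (A * (ε / a) ^ ((1 : ℝ) / m)) :=
          mul_le_mul_of_nonneg_left h1 (by positivity)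
      _ = K1 * (1 + Real.log (a / ε)) * (ε / a) ^ ((1 : ℝ) / m) := by rw [hK1]; ring
      _ ≤ _ := by
        rw [zero_add, pow_one]
        gcongr
  | succ r ih =>
    intro g j hexp hdeg hj ε a hε hεa ha
    have hL : 0 ≤ Real.log (a / ε) := Real.log_nonneg (by rwa [one_le_div hε])
    have ha0 : 0 < a := hε.trans_le hεa
    obtain ⟨i, j', hj', hco⟩ := exists_pderiv_coeff (r := m + r) g j hj
    have hrec := ih (MvPolynomial.pderiv i g) j' (pderiv_exponent_le i hexp)
      (pderiv_degree_le i hdeg) hj' ε a hε hεa (ha.trans hco)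
    calc _ ≤ _ := weight_peel m hm g i hexp hε hεa
      _ ≤ K * (1 + Real.log (a / ε)) *
          ((K * (1 + Real.log (a / ε))) ^ (r + 1) * (ε / a) ^ ((1 : ℝ) / m)) := by
        apply mul_le_mul _ hrec (integral_nonneg fun z => weight_nonneg hε _) (by positivity)
        gcongr
      _ = _ := by ring

lemma pow_log_le {m d D : ℕ} (hD : D ≤ d) {t : ℝ} (ht : 0 ≤ t) :
    (1 + t) ^ (D - m) ≤ 2 ^ (d - m) * (t ^ (d - m) + 1) := by
  calc (1 + t) ^ (D - m) ≤ (1 + t) ^ (d - m) :=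
        pow_le_pow_right₀ (by linarith) (by omega)
    _ ≤ (2 * max t 1) ^ (d - m) := by
        gcongr
        have := le_max_left t 1
        have := le_max_right t 1
        linarith
    _ = 2 ^ (d - m) * (max t 1) ^ (d - m) := mul_pow _ _ _
    _ ≤ _ := by
        gcongr
        rcases max_cases t 1 with ⟨h, _⟩ | ⟨h, _⟩ <;> rw [h]
        · linarith
        · rw [one_pow]; have := pow_nonneg ht (d - m); linarith

/-- The key estimate: Gaussian averages of `φ' (f)` for `|φ| ≤ ε`, `|φ'| ≤ 1`. -/
lemma main_estimate (m d : ℕ) (hm : 1 ≤ m) : ∃ K : ℝ, 1 ≤ K ∧ ∀ (n D : ℕ)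
    (f : MvPolynomial (Fin n) ℝ) (j : Fin n →₀ ℕ), 1 ≤ D → D ≤ d →
    (∀ k ∈ f.support, ∀ l, k l ≤ m) → (∀ k ∈ f.support, k.degree ≤ D) → j.degree = D →
    ∀ ε a : ℝ, 0 < ε → ε ≤ a → a ≤ |f.coeff j| →
    ∀ φ φ' : ℝ → ℝ, (∀ s, HasDerivAt φ (φ' s) s) → Continuous φ' →
    (∀ s, |φ s| ≤ ε) → (∀ s, |φ' s| ≤ 1) →
    |∫ x, φ' (MvPolynomial.eval x f) ∂(_root_.stdGaussian n)| ≤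
      K * (ε / a) ^ ((1 : ℝ) / m) * (|Real.log (ε / a)| ^ (d - m) + 1) := by
  obtain ⟨A, hA1, hA⟩ := exists_direction m hm
  obtain ⟨K0, hK01, hK0⟩ := weight_chain m hm
  have hm' : (1 : ℝ) ≤ m := by exact_mod_cast hm
  have hu := unitMass_pos
  have hU := one_le_univConst m
  set K1 : ℝ := univConst m * A with hK1
  set K2 : ℝ := univConst m * unitMass⁻¹ * (K0 ^ d * 2 ^ (d - m)) with hK2
  have hK1' : 1 ≤ K1 := by nlinarith
  refine ⟨max K1 K2, hK1'.trans (le_max_left _ _), ?_⟩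
  intro n D f j hD hDd hexp hdeg hj ε a hε hεa ha φ φ' hφ hφc hφb hφb'
  have ha0 : 0 < a := hε.trans_le hεa
  have hL : 0 ≤ Real.log (a / ε) := Real.log_nonneg (by rwa [one_le_div hε])
  have hlog : |Real.log (ε / a)| = Real.log (a / ε) := by
    rw [← inv_div, Real.log_inv, abs_neg, abs_of_nonneg hL]
  rw [hlog]
  have hmeas : Measurable fun x : Fin n → ℝ => φ' (MvPolynomial.eval x f) :=
    hφc.measurable.comp (measurable_eval f)
  by_cases hDm : D ≤ m
  · -- low total degree: a single line direction suffices
    obtain ⟨v, hv, hvA⟩ := hA n D f j hD hDm hj (abs_pos.mp (ha0.trans_le ha))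
    have h1 : |∫ x, φ' (MvPolynomial.eval x f) ∂(_root_.stdGaussian n)| ≤
        univConst m * (A * (ε / a) ^ ((1 : ℝ) / m)) := by
      apply integral_le_of_lines_const v hv hmeas fun x => hφb' _
      intro y
      simp_rw [← linePoly_eval]
      refine (univariate_bound_weight m hm _ ((natDegree_linePoly_le y v hdeg).trans hDm)
        hφ hφc hε hφb hφb' (a := a)).trans ?_
      apply mul_le_mul_of_nonneg_left _ (by linarith)
      apply weight_le_of_coeff hm hε hεa hA1
      rw [← coeff_linePoly y v hdeg] at hvA
      refine (ha.trans hvA).trans (mul_le_mul_of_nonneg_left ?_ (by linarith))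
      refine le_trans ?_ (abs_coeff_le_coeffNorm _ (D - 1))
      rw [Polynomial.coeff_derivative, abs_mul, Nat.sub_add_cancel hD]
      apply le_mul_of_one_le_right (abs_nonneg _)
      have : (0 : ℝ) ≤ ((D - 1 : ℕ) : ℝ) := Nat.cast_nonneg _
      rw [abs_of_nonneg (by linarith)]
      linarith
    calc _ ≤ K1 * (ε / a) ^ ((1 : ℝ) / m) * 1 := by rw [hK1]; linarith
      _ ≤ _ := by
        gcongr
        · exact le_max_left _ _
        · have := pow_nonneg hL (d - m); linarith
  · push Not at hDm
    obtain ⟨r, rfl⟩ : ∃ r, D = m + r + 1 := ⟨D - m - 1, by omega⟩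
    obtain ⟨i, j', hj', hco⟩ := exists_pderiv_coeff (r := m + r) f j hj
    have hrec := hK0 n r (MvPolynomial.pderiv i f) j' (pderiv_exponent_le i hexp)
      (pderiv_degree_le i hdeg) hj' ε a hε hεa (ha.trans hco)
    have h1 : |∫ x, φ' (MvPolynomial.eval x f) ∂(_root_.stdGaussian n)| ≤
        (univConst m * unitMass⁻¹) *
        ∫ x, weight m ε a |MvPolynomial.eval x (MvPolynomial.pderiv i f)|
          ∂(_root_.stdGaussian n) := by
      apply integral_le_of_lines (Pi.single i 1) (sum_single_sq i) hmeas
        (measurable_weight_eval _) (fun x => hφb' _) (fun x => abs_weight_le_one hε _)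
      intro y
      simp_rw [← linePoly_eval, ← derivative_linePoly]
      have hd := natDegree_linePoly_single_le y i (g := f) (m := m) fun k hk => hexp k hk i
      refine (univariate_bound_weight m hm _ hd hφ hφc hε hφb hφb' (a := a)).trans ?_
      rw [mul_assoc]
      exact mul_le_mul_of_nonneg_left (weight_coeffNorm_le m _ hε) (by linarith)
    have hK0r : K0 ^ (r + 1) ≤ K0 ^ d := pow_le_pow_right₀ hK01 (by omega)
    have hlogpow : (1 + Real.log (a / ε)) ^ (r + 1) ≤
        2 ^ (d - m) * (Real.log (a / ε) ^ (d - m) + 1) := by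
      have := pow_log_le (m := m) hDd hL
      rwa [show m + r + 1 - m = r + 1 by omega] at this
    calc _ ≤ (univConst m * unitMass⁻¹) *
          ((K0 * (1 + Real.log (a / ε))) ^ (r + 1) * (ε / a) ^ ((1 : ℝ) / m)) :=
          h1.trans (mul_le_mul_of_nonneg_left hrec (by positivity))
      _ = (univConst m * unitMass⁻¹) *
          ((K0 ^ (r + 1) * (1 + Real.log (a / ε)) ^ (r + 1)) * (ε / a) ^ ((1 : ℝ) / m)) := by
          rw [mul_pow]
      _ ≤ (univConst m * unitMass⁻¹) *
          ((K0 ^ d * (2 ^ (d - m) * (Real.log (a / ε) ^ (d - m) + 1))) *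
            (ε / a) ^ ((1 : ℝ) / m)) := by
          gcongr
      _ = K2 * (ε / a) ^ ((1 : ℝ) / m) * (Real.log (a / ε) ^ (d - m) + 1) := by
          rw [hK2]; ring
      _ ≤ _ := by
          gcongr
          exact le_max_right _ _

/-! ### From test functions to the density -/

/-- Testing against primitives: if `μ` integrates to at most `κ` the derivative of every function
that is `ε`-small with `1`-bounded derivative, then shifting by `|h| ≤ ε` changes the integral of
a continuous function with values in `[0,1]` by at most `κ`. -/
lemma shift_integral_le {μ : Measure ℝ} [IsProbabilityMeasure μ] {ε κ : ℝ}
    (H : ∀ φ φ' : ℝ → ℝ, (∀ s, HasDerivAt φ (φ' s) s) → Continuous φ' → (∀ s, |φ s| ≤ ε) →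
      (∀ s, |φ' s| ≤ 1) → |∫ s, φ' s ∂μ| ≤ κ)
    {h : ℝ} (hh : |h| ≤ ε) {ψ : ℝ → ℝ} (hψ : Continuous ψ) (h0 : ∀ s, 0 ≤ ψ s)
    (h1 : ∀ s, ψ s ≤ 1) : ∫ s, ψ (s + h) ∂μ ≤ ∫ s, ψ s ∂μ + κ := by
  have habs : ∀ s, |ψ s| ≤ 1 := fun s => by rw [abs_of_nonneg (h0 s)]; exact h1 s
  have key := H (fun s => ∫ t in s..(s + h), ψ t) (fun s => ψ (s + h) - ψ s) ?_ (by fun_prop) ?_ ?_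
  · rw [integral_sub] at key
    · linarith [(abs_le.mp key).2]
    · exact Integrable.of_bound (by fun_prop) 1
        (Filter.Eventually.of_forall fun s => habs _)
    · exact Integrable.of_bound (by fun_prop) 1
        (Filter.Eventually.of_forall fun s => habs _)
  · intro s
    have hd : ∀ u, HasDerivAt (fun x => ∫ t in (0 : ℝ)..x, ψ t) (ψ u) u := fun u =>
      intervalIntegral.integral_hasDerivAt_right (hψ.intervalIntegrable _ _)
        (hψ.stronglyMeasurableAtFilter _ _) hψ.continuousAt
    have heq : (fun s => ∫ t in s..(s + h), ψ t) =
        fun s => (∫ t in (0 : ℝ)..(s + h), ψ t) - ∫ t in (0 : ℝ)..s, ψ t := by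
      funext s
      rw [intervalIntegral.integral_interval_sub_left (hψ.intervalIntegrable _ _)
        (hψ.intervalIntegrable _ _)]
    rw [heq]
    exact ((hd (s + h)).comp_add_const s h).sub (hd s)
  · intro s
    have := intervalIntegral.norm_integral_le_of_norm_le_const (a := s) (b := s + h) (f := ψ)
      (C := 1) fun x _ => habs x
    simp only [Real.norm_eq_abs, add_sub_cancel_left, one_mul] at this
    exact this.trans hh
  · intro s
    rw [abs_le]
    constructor <;> linarith [h0 s, h1 s, h0 (s + h), h1 (s + h)]

lemma shift_measure_le_of_isClosed {μ : Measure ℝ} [IsProbabilityMeasure μ] {ε κ : ℝ}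
    (H : ∀ φ φ' : ℝ → ℝ, (∀ s, HasDerivAt φ (φ' s) s) → Continuous φ' → (∀ s, |φ s| ≤ ε) →
      (∀ s, |φ' s| ≤ 1) → |∫ s, φ' s ∂μ| ≤ κ)
    {h : ℝ} (hh : |h| ≤ ε) {F : Set ℝ} (hF : IsClosed F) :
    (μ.map (· + h)).real F ≤ μ.real F + κ := by
  have hδ : ∀ n : ℕ, (0 : ℝ) < 1 / ((n : ℝ) + 1) := fun n => by positivity
  have hp : IsProbabilityMeasure (μ.map (· + h)) :=
    Measure.isProbabilityMeasure_map (by fun_prop)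
  have t1 := tendsto_integral_thickenedIndicator_of_isClosed (μ.map (· + h)) hF hδ
    tendsto_one_div_add_atTop_nhds_zero_nat
  have t2 := tendsto_integral_thickenedIndicator_of_isClosed μ hF hδ
    tendsto_one_div_add_atTop_nhds_zero_nat
  refine le_of_tendsto_of_tendsto' t1 (t2.add_const κ) fun n => ?_
  have hc : Continuous fun s : ℝ => ((thickenedIndicator (hδ n) F s : NNReal) : ℝ) :=
    NNReal.continuous_coe.comp (thickenedIndicator (hδ n) F).continuous
  rw [integral_map (by fun_prop) hc.aestronglyMeasurable]
  exact shift_integral_le H hh hc (fun s => NNReal.coe_nonneg _)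
    (fun s => by exact_mod_cast thickenedIndicator_le_one (hδ n) F s)

/-- The same bound for measurable sets, by inner regularity; the two-sided version follows by
passing to complements. -/
lemma abs_shift_measure_sub_le {μ : Measure ℝ} [IsProbabilityMeasure μ] {ε κ : ℝ}
    (H : ∀ φ φ' : ℝ → ℝ, (∀ s, HasDerivAt φ (φ' s) s) → Continuous φ' → (∀ s, |φ s| ≤ ε) →
      (∀ s, |φ' s| ≤ 1) → |∫ s, φ' s ∂μ| ≤ κ)
    {h : ℝ} (hh : |h| ≤ ε) {A : Set ℝ} (hA : MeasurableSet A) :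
    |(μ.map (· + h)).real A - μ.real A| ≤ κ := by
  have hp : IsProbabilityMeasure (μ.map (· + h)) :=
    Measure.isProbabilityMeasure_map (by fun_prop)
  have one : ∀ B : Set ℝ, MeasurableSet B → (μ.map (· + h)).real B ≤ μ.real B + κ := by
    intro B hB
    refine le_of_forall_pos_le_add fun δ hδ => ?_
    obtain ⟨F, hFB, hF, hlt⟩ := hB.exists_isClosed_lt_add (μ := μ.map (· + h))
      (measure_ne_top _ _) (ε := ENNReal.ofReal δ) (by simpa using hδ)
    have h1 := shift_measure_le_of_isClosed H hh hF
    have h2 : μ.real F ≤ μ.real B := measureReal_mono hFB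
    have h3 : (μ.map (· + h)).real B ≤ (μ.map (· + h)).real F + δ := by
      have := ENNReal.toReal_mono (by finiteness) hlt.le
      rwa [ENNReal.toReal_add (by finiteness) (by finiteness), ENNReal.toReal_ofReal hδ.le] at this
    linarith
  have h1 := one A hA
  have h2 := one Aᶜ hA.compl
  rw [probReal_compl_eq_one_sub hA, probReal_compl_eq_one_sub hA] at h2
  rw [abs_le]
  constructor <;> linarith

/-- Asymptotic shift invariance forces absolute continuity: a Lebesgue-null set has `μ`-null
translates for almost every shift. -/
lemma absolutelyContinuous_of_shift {μ : Measure ℝ} [IsProbabilityMeasure μ]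
    (H : ∀ δ : ℝ, 0 < δ → ∃ ε : ℝ, 0 < ε ∧ ∀ h : ℝ, |h| ≤ ε → ∀ A : Set ℝ, MeasurableSet A →
      |(μ.map (· + h)).real A - μ.real A| ≤ δ) : μ ≪ volume := by
  refine Measure.AbsolutelyContinuous.mk fun A hA hA0 => ?_
  have hfub : ∀ᵐ h : ℝ, μ ((· + h) ⁻¹' A) = 0 := by
    have hm : MeasurableSet {p : ℝ × ℝ | p.2 + p.1 ∈ A} :=
      (measurable_snd.add measurable_fst) hA
    have h0 : (volume.prod μ) {p : ℝ × ℝ | p.2 + p.1 ∈ A} = 0 := by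
      rw [Measure.prod_apply_symm hm]
      have : ∀ s : ℝ, volume ((fun x : ℝ => (x, s)) ⁻¹' {p : ℝ × ℝ | p.2 + p.1 ∈ A}) = 0 := by
        intro s
        have : ((fun x : ℝ => (x, s)) ⁻¹' {p : ℝ × ℝ | p.2 + p.1 ∈ A}) = (s + ·) ⁻¹' A := rfl
        rw [this, measure_preimage_add, hA0]
      rw [lintegral_congr this, lintegral_zero]
    exact Measure.ae_ae_of_ae_prod (measure_eq_zero_iff_ae_notMem.mp h0) |>.mono fun h hh =>
      measure_eq_zero_iff_ae_notMem.mpr hh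
  have hreal : μ.real A = 0 := by
    refine le_antisymm (le_of_forall_pos_le_add fun δ hδ => ?_) measureReal_nonneg
    obtain ⟨ε, hε, hs⟩ := H δ hδ
    have hex : ∃ h ∈ Set.Icc (-ε) ε, μ ((· + h) ⁻¹' A) = 0 := by
      by_contra hcon
      push Not at hcon
      have : volume (Set.Icc (-ε) ε) = 0 :=
        measure_mono_null (fun h hh => hcon h hh) (ae_iff.mp hfub)
      rw [Real.volume_Icc] at this
      simp at this
      linarith
    obtain ⟨h, hh, hz⟩ := hex
    have := hs h (abs_le.mpr hh) A hA
    rw [measureReal_def, Measure.map_apply (by fun_prop) hA, hz, ENNReal.toReal_zero] at this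
    linarith [(abs_le.mp this).1]
  exact (measureReal_eq_zero_iff).mp hreal

/-- A total-variation bound for the shifted measure is an `L¹` bound for the shifted density,
up to a factor `2`. -/
lemma integral_abs_shift_le {μ : Measure ℝ} [IsProbabilityMeasure μ] {ρ : ℝ → ℝ}
    (hρm : Measurable ρ) (hρ0 : ∀ s, 0 ≤ ρ s) (hρ : Integrable ρ)
    (hμ : μ = volume.withDensity fun s => ENNReal.ofReal (ρ s)) {h κ : ℝ}
    (H : ∀ A : Set ℝ, MeasurableSet A → |(μ.map (· + -h)).real A - μ.real A| ≤ κ) :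
    ∫ s, |ρ (s + h) - ρ s| ≤ 2 * κ := by
  have hreal : ∀ A : Set ℝ, MeasurableSet A → μ.real A = ∫ s in A, ρ s := by
    intro A hA
    rw [measureReal_def, hμ, withDensity_apply _ hA,
      integral_eq_lintegral_of_nonneg_ae (Filter.Eventually.of_forall hρ0)
        hρm.aestronglyMeasurable.restrict]
  have hshift : ∀ A : Set ℝ, MeasurableSet A →
      (μ.map (· + -h)).real A = ∫ s in A, ρ (s + h) := by
    intro A hA
    have hA' : MeasurableSet ((· + -h) ⁻¹' A) := (measurable_add_const (-h)) hA
    rw [measureReal_def, Measure.map_apply (by fun_prop) hA, ← measureReal_def, hreal _ hA',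
      ← integral_indicator hA', ← integral_indicator hA,
      ← integral_add_right_eq_self _ h]
    congr 1
    funext s
    have hmem : s + h ∈ (· + -h) ⁻¹' A ↔ s ∈ A := by
      rw [Set.mem_preimage, add_neg_cancel_right]
    by_cases hs : s ∈ A
    · rw [Set.indicator_of_mem (hmem.mpr hs), Set.indicator_of_mem hs]
    · rw [Set.indicator_of_notMem (fun hc => hs (hmem.mp hc)), Set.indicator_of_notMem hs]
  have hρh : Integrable fun s => ρ (s + h) := hρ.comp_add_right h
  have hg : Integrable fun s => ρ (s + h) - ρ s := hρh.sub hρ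
  set A : Set ℝ := {s | 0 ≤ ρ (s + h) - ρ s} with hAdef
  have hA : MeasurableSet A := measurableSet_le measurable_const
    ((hρm.comp (measurable_add_const h)).sub hρm)
  rw [← integral_add_compl hA hg.abs]
  have e1 : ∫ s in A, |ρ (s + h) - ρ s| = (μ.map (· + -h)).real A - μ.real A := by
    rw [hshift A hA, hreal A hA, ← integral_sub hρh.integrableOn hρ.integrableOn]
    exact setIntegral_congr_fun hA fun s hs => abs_of_nonneg hs
  have e2 : ∫ s in Aᶜ, |ρ (s + h) - ρ s| = -((μ.map (· + -h)).real Aᶜ - μ.real Aᶜ) := by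
    rw [hshift _ hA.compl, hreal _ hA.compl, ← integral_sub hρh.integrableOn hρ.integrableOn,
      ← integral_neg]
    refine setIntegral_congr_fun hA.compl fun s hs => abs_of_nonpos ?_
    have : ¬ (0 ≤ ρ (s + h) - ρ s) := hs
    linarith
  rw [e1, e2]
  linarith [(abs_le.mp (H A hA)).2, (abs_le.mp (H Aᶜ hA.compl)).1]

/-- The supremum defining `topCoeff` is attained, at a nonzero coefficient. -/
lemma exists_topCoeff {n : ℕ} (f : MvPolynomial (Fin n) ℝ) (hf : f ≠ 0) :
    0 < topCoeff f ∧ ∃ j : Fin n →₀ ℕ, j.degree = f.totalDegree ∧ topCoeff f = |f.coeff j| := by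
  set S : Set ℝ := {c : ℝ | ∃ j : Fin n →₀ ℕ, (j.sum fun _ e => e) = f.totalDegree ∧
    c = |MvPolynomial.coeff j f|} with hS
  have hfin : S.Finite := by
    refine ((f.support.image fun j => |f.coeff j|) ∪ {0}).finite_toSet.subset ?_
    rintro c ⟨j, -, rfl⟩
    by_cases hj : j ∈ f.support
    · simp only [Finset.coe_union, Finset.coe_image, Set.mem_union]
      exact Or.inl ⟨j, hj, rfl⟩
    · rw [MvPolynomial.notMem_support_iff] at hj
      simp [hj]
  obtain ⟨k, hk, hkd⟩ : ∃ k ∈ f.support, f.totalDegree = k.sum fun _ e => e :=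
    Finset.exists_mem_eq_sup _ (MvPolynomial.support_nonempty.mpr hf) _
  have hkS : |f.coeff k| ∈ S := ⟨k, hkd.symm, rfl⟩
  have hpos : 0 < topCoeff f :=
    (abs_pos.mpr (MvPolynomial.mem_support_iff.mp hk)).trans_le (le_csSup hfin.bddAbove hkS)
  obtain ⟨j, hj, hjc⟩ : topCoeff f ∈ S := Set.Nonempty.csSup_mem ⟨_, hkS⟩ hfin
  exact ⟨hpos, j, hj, hjc⟩

/-- The rate `t^{1/m} (|log t|^k + 1)` vanishes at `0`. -/
lemma tendsto_rate (m k : ℕ) (hm : 1 ≤ m) :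
    Filter.Tendsto (fun t : ℝ => t ^ ((1 : ℝ) / m) * (|Real.log t| ^ k + 1))
      (nhdsWithin 0 (Set.Ioi 0)) (nhds 0) := by
  have hp : (0 : ℝ) < 1 / m := by positivity
  have h1 : Filter.Tendsto (fun t : ℝ => t ^ ((1 : ℝ) / m)) (nhdsWithin 0 (Set.Ioi 0)) (nhds 0) := by
    have := (Real.continuousAt_rpow_const 0 ((1 : ℝ) / m) (Or.inr hp.le)).tendsto
    rw [Real.zero_rpow hp.ne'] at this
    exact this.mono_left nhdsWithin_le_nhds
  have h2 : Filter.Tendsto (fun t : ℝ => t ^ ((1 : ℝ) / m) * |Real.log t| ^ k)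
      (nhdsWithin 0 (Set.Ioi 0)) (nhds 0) := by
    have h3 := (isLittleO_abs_log_rpow_rpow_nhdsGT_zero (s := -((1 : ℝ) / m)) (k : ℝ)
      (by linarith)).tendsto_div_nhds_zero
    refine h3.congr' ?_
    filter_upwards [self_mem_nhdsWithin] with t ht
    have ht : (0 : ℝ) < t := ht
    rw [Real.rpow_neg ht.le, div_inv_eq_mul, Real.rpow_natCast, mul_comm]
  have := h2.add h1
  simp only [add_zero] at this
  refine this.congr fun t => by ring

/-- Theorem 1.1 (main theorem): for fixed `m ≤ d` there is a constant `C(m,d)` such that for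
every non-constant polynomial `f` on `ℝⁿ` of total degree at most `d` in which every variable
enters to a power at most `m`, the distribution of `f(X)` (with `X` standard Gaussian in `ℝⁿ`)
has a density `ϱ_f` with
`ω(ϱ_f, ε) ≤ C(m,d) (ε/a[f])^{1/m} (|ln(ε/a[f])|^{d-m} + 1)` for all `ε > 0`. -/
theorem main_theorem (m d : ℕ) (hm : 1 ≤ m) (hmd : m ≤ d) :
    ∃ C : ℝ, 0 < C ∧
      ∀ (n : ℕ) (f : MvPolynomial (Fin n) ℝ),
        f.totalDegree ≠ 0 →
        (∀ i : Fin n, f.degreeOf i ≤ m) →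
        f.totalDegree ≤ d →
        ∃ ρ : ℝ → ℝ, Integrable ρ ∧
          (stdGaussian n).map (fun x => MvPolynomial.eval x f)
            = volume.withDensity (fun s => ENNReal.ofReal (ρ s)) ∧
          ∀ ε : ℝ, 0 < ε →
            omegaMod ρ ε ≤
              C * (ε / topCoeff f) ^ ((1 : ℝ) / m) *
                (|Real.log (ε / topCoeff f)| ^ (d - m) + 1) := by
  obtain ⟨K, hK1, hK⟩ := main_estimate m d hm
  refine ⟨2 * K, by linarith, fun n f hf hdeg hd => ?_⟩
  have hf0 : f ≠ 0 := by rintro rfl; simp at hf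
  obtain ⟨ha, j, hj, hja⟩ := exists_topCoeff f hf0
  set a := topCoeff f with ha_def
  set μ : Measure ℝ := (_root_.stdGaussian n).map (fun x => MvPolynomial.eval x f) with hμ
  have hμp : IsProbabilityMeasure μ :=
    Measure.isProbabilityMeasure_map (measurable_eval f).aemeasurable
  have hest : ∀ ε : ℝ, 0 < ε → ε ≤ a → ∀ φ φ' : ℝ → ℝ, (∀ s, HasDerivAt φ (φ' s) s) →
      Continuous φ' → (∀ s, |φ s| ≤ ε) → (∀ s, |φ' s| ≤ 1) →
      |∫ s, φ' s ∂μ| ≤ K * (ε / a) ^ ((1 : ℝ) / m) * (|Real.log (ε / a)| ^ (d - m) + 1) := by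
    intro ε hε hεa φ φ' h1 h2 h3 h4
    rw [hμ, integral_map (measurable_eval f).aemeasurable h2.aestronglyMeasurable]
    exact hK n f.totalDegree f j (Nat.one_le_iff_ne_zero.mpr hf) hd
      (fun k hk l => (MvPolynomial.monomial_le_degreeOf l hk).trans (hdeg l))
      (fun k hk => MvPolynomial.le_totalDegree hk) hj ε a hε hεa hja.le φ φ' h1 h2 h3 h4
  have hshift : ∀ ε : ℝ, 0 < ε → ε ≤ a → ∀ h : ℝ, |h| ≤ ε → ∀ A : Set ℝ, MeasurableSet A →
      |(μ.map (· + h)).real A - μ.real A| ≤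
        K * (ε / a) ^ ((1 : ℝ) / m) * (|Real.log (ε / a)| ^ (d - m) + 1) :=
    fun ε hε hεa h hh A hA => abs_shift_measure_sub_le (hest ε hε hεa) hh hA
  have hac : μ ≪ volume := by
    refine absolutelyContinuous_of_shift fun δ hδ => ?_
    have hev := ((tendsto_rate m (d - m) hm).const_mul K).eventually
      (gt_mem_nhds (by simpa using hδ))
    obtain ⟨t, ⟨htδ, ht1⟩, ht0⟩ := ((hev.and
      (nhdsWithin_le_nhds (gt_mem_nhds (zero_lt_one (α := ℝ))))).and
        self_mem_nhdsWithin).exists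
    have ht0 : (0 : ℝ) < t := ht0
    refine ⟨t * a, by positivity, fun h hh A hA => ?_⟩
    refine (hshift (t * a) (by positivity) (by nlinarith) h hh A hA).trans ?_
    rw [mul_div_cancel_right₀ _ ha.ne', mul_assoc]
    exact htδ.le
  set ρ : ℝ → ℝ := fun s => (μ.rnDeriv volume s).toReal with hρdef
  have hρm : Measurable ρ := (Measure.measurable_rnDeriv _ _).ennreal_toReal
  have hρ0 : ∀ s, 0 ≤ ρ s := fun s => ENNReal.toReal_nonneg
  have hρi : Integrable ρ := Measure.integrable_toReal_rnDeriv
  have hdens : μ = volume.withDensity fun s => ENNReal.ofReal (ρ s) := by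
    conv_lhs => rw [← Measure.withDensity_rnDeriv_eq μ volume hac]
    refine withDensity_congr_ae ?_
    filter_upwards [Measure.rnDeriv_lt_top μ volume] with s hs
    rw [hρdef, ENNReal.ofReal_toReal hs.ne]
  refine ⟨ρ, hρi, hdens, fun ε hε => ?_⟩
  refine csSup_le ⟨_, 0, by simpa using hε.le, rfl⟩ ?_
  rintro r ⟨h, hh, rfl⟩
  by_cases hεa : ε ≤ a
  · refine (integral_abs_shift_le hρm hρ0 hρi hdens
      fun A hA => hshift ε hε hεa (-h) (by rwa [abs_neg]) A hA).trans (le_of_eq (by ring))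
  · -- for `ε > a` the right-hand side is at least `2`
    push Not at hεa
    have hp : IsProbabilityMeasure (μ.map (· + -h)) :=
      Measure.isProbabilityMeasure_map (by fun_prop)
    refine (integral_abs_shift_le (κ := 1) hρm hρ0 hρi hdens fun A hA => ?_).trans ?_
    · rw [abs_le]
      constructor <;> linarith [measureReal_nonneg (μ := μ.map (· + -h)) (s := A),
        measureReal_nonneg (μ := μ) (s := A),
        measureReal_le_one (μ := μ) (s := A), measureReal_le_one (μ := μ.map (· + -h)) (s := A)]
    · have h1 : (1 : ℝ) ≤ (ε / a) ^ ((1 : ℝ) / m) :=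
        Real.one_le_rpow ((one_le_div ha).mpr hεa.le) (by positivity)
      have h2 : (1 : ℝ) ≤ |Real.log (ε / a)| ^ (d - m) + 1 :=
        le_add_of_nonneg_left (by positivity)
      have h3 : (1 : ℝ) ≤ K * (ε / a) ^ ((1 : ℝ) / m) * (|Real.log (ε / a)| ^ (d - m) + 1) :=
        one_le_mul_of_one_le_of_one_le (one_le_mul_of_one_le_of_one_le hK1 h1) h2
      linarith
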